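/- arXiv:2211.09914 — 9 statements merged into one kernel-verified Lean document; each statement's English description precedes it below -/
import Mathlib

section
/- Let τ > 0 and let F : ℝ → ℝ be infinitely differentiable. Let y₀ : [−τ, 0] → ℝ be continuous and let y : [−τ, ∞) → ℝ be a continuous function with y = y₀ on [−τ, 0] which is differentiable on (0, ∞) with y′(t) = F(y(t − τ)) for all t > 0. Then for every integer n ≥ 1, the restriction of y to the open interval ((n−1)τ, ∞) is n times continuously differentiable. In particular the solution obtained by the method of steps gains one degree of differentiability on each successive interval of length τ. -/
/-- For τ > 0 and smooth `F`, any solution of the constant-delay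
equation `y'(t) = F (y (t - τ))` with continuous history `y₀` gains one degree of
differentiability on each successive interval of length τ: for every `n ≥ 1`, `y`
is `Cⁿ` on the open interval `((n-1)τ, ∞)`. -/
theorem method_of_steps_smoothing
    (τ : ℝ) (hτ : 0 < τ) (F : ℝ → ℝ) (hF : ContDiff ℝ (⊤ : ℕ∞) F)
    (y₀ y : ℝ → ℝ)
    (hy₀ : ContinuousOn y₀ (Set.Icc (-τ) 0))
    (hy : ContinuousOn y (Set.Ici (-τ)))
    (hist : ∀ t ∈ Set.Icc (-τ) (0 : ℝ), y t = y₀ t)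
    (hode : ∀ t : ℝ, 0 < t → HasDerivAt y (F (y (t - τ))) t)
    (n : ℕ) (hn : 1 ≤ n) :
    ContDiffOn ℝ n y (Set.Ioi (((n : ℝ) - 1) * τ)) := by
  clear hn
  induction n with
  | zero =>
    simp only [Nat.cast_zero]
    rw [contDiffOn_zero]
    refine hy.mono ?_
    intro t ht
    simp only [Set.mem_Ioi, Set.mem_Ici] at *
    linarith
  | succ n ih =>
    have hpos : ∀ t ∈ Set.Ioi ((((n + 1 : ℕ) : ℝ) - 1) * τ), 0 < t := by
      intro t ht
      have h0 : 0 ≤ (n : ℝ) * τ := by positivity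
      simp only [Set.mem_Ioi] at ht
      push_cast at ht
      linarith
    have key : ContDiffOn ℝ ((n : ℕ∞) + 1) y (Set.Ioi ((((n + 1 : ℕ) : ℝ) - 1) * τ)) := by
      refine (contDiffOn_succ_iff_deriv_of_isOpen isOpen_Ioi).2 ⟨?_, ?_, ?_⟩
      · intro t ht
        exact (hode t (hpos t ht)).differentiableAt.differentiableWithinAt
      · intro h
        exact absurd h (by simp)
      · have hFn : ContDiff ℝ (n : ℕ∞) F := hF.of_le (by exact_mod_cast le_top)
        have ih' : ContDiffOn ℝ (n : ℕ∞) y (Set.Ioi (((n : ℝ) - 1) * τ)) := ih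
        have hs : ContDiffOn ℝ (n : ℕ∞) (fun t : ℝ => t - τ)
            (Set.Ioi ((((n + 1 : ℕ) : ℝ) - 1) * τ)) := by fun_prop
        have hc := hFn.comp_contDiffOn (ContDiffOn.comp (g := y) ih' hs (by
          intro t ht
          simp only [Set.mem_Ioi] at *
          push_cast at ht
          linarith))
        exact hc.congr fun t ht => (hode t (hpos t ht)).deriv
    exact_mod_cast key
end

section
/- Fix real numbers ℓ > 0, K₂ > 0 and c ∈ ℝ with |c| ≤ K₂. Let X = {f ∈ C([0,1/2], ℝ) : f(0) = c, sup_{t∈[0,1/2]} |f(t)| ≤ K₂, f is differentiable on (0,1/2) with |f′(t)| ≤ ℓ for all t ∈ (0,1/2)}, and for f, g ∈ X set d(f, g) = sup_{t∈(0,1/2)} |f′(t) − g′(t)|. Then d is a metric on X and (X, d) is a complete metric space. -/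
/-- The distance `d(f,g) = sup_{t ∈ (0,1/2)} |f'(t) - g'(t)|`. -/
noncomputable def dd (f g : ℝ → ℝ) : ℝ :=
  ⨆ t : Set.Ioo (0 : ℝ) (1 / 2), |deriv f t.1 - deriv g t.1|

section Helpers
open Set Filter Topology

abbrev XX (ℓ K₂ c : ℝ) := {f : ℝ → ℝ //
        ContinuousOn f (Set.Icc 0 (1 / 2)) ∧ f 0 = c ∧
        (∀ t ∈ Set.Icc (0 : ℝ) (1 / 2), |f t| ≤ K₂) ∧
        (∀ t ∈ Set.Ioo (0 : ℝ) (1 / 2), DifferentiableAt ℝ f t ∧ |deriv f t| ≤ ℓ) ∧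
        (∀ t : ℝ, t ≤ 0 → f t = f 0) ∧ (∀ t : ℝ, 1 / 2 ≤ t → f t = f (1 / 2))}

variable {ℓ K₂ c : ℝ}

theorem dd_le {f g : ℝ → ℝ} {b : ℝ}
    (h : ∀ t ∈ Set.Ioo (0 : ℝ) (1 / 2), |deriv f t - deriv g t| ≤ b) : dd f g ≤ b := by
  haveI : Nonempty (Set.Ioo (0 : ℝ) (1 / 2)) := ⟨⟨1/4, by norm_num, by norm_num⟩⟩
  exact ciSup_le fun t => h t.1 t.2

theorem le_dd (f g : XX ℓ K₂ c) {t : ℝ} (ht : t ∈ Set.Ioo (0 : ℝ) (1 / 2)) :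
    |deriv f.1 t - deriv g.1 t| ≤ dd f.1 g.1 := by
  have hb : BddAbove (Set.range fun t : Set.Ioo (0 : ℝ) (1 / 2) =>
      |deriv f.1 t.1 - deriv g.1 t.1|) := by
    refine ⟨ℓ + ℓ, ?_⟩
    rintro _ ⟨s, rfl⟩
    have h1 := (f.2.2.2.2.1 s.1 s.2).2
    have h2 := (g.2.2.2.2.1 s.1 s.2).2
    exact (abs_sub _ _).trans (add_le_add h1 h2)
  exact le_ciSup hb ⟨t, ht⟩

theorem dd_nonneg (f g : ℝ → ℝ) : 0 ≤ dd f g := Real.iSup_nonneg fun _ => abs_nonneg _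

theorem val_le_dd (f g : XX ℓ K₂ c) (t : ℝ) : |f.1 t - g.1 t| ≤ dd f.1 g.1 := by
  have key : ∀ t : ℝ, 0 < t → t ≤ 1 / 2 → |f.1 t - g.1 t| ≤ dd f.1 g.1 := by
    intro t h0 h1
    have hsub : Set.Icc 0 t ⊆ Set.Icc (0:ℝ) (1/2) := Set.Icc_subset_Icc_right h1
    obtain ⟨x, hx, hx'⟩ := exists_hasDerivAt_eq_slope (fun s => f.1 s - g.1 s)
      (fun s => deriv f.1 s - deriv g.1 s) h0
      ((f.2.1.mono hsub).sub (g.2.1.mono hsub))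
      (fun s hs => by
        have hs' : s ∈ Set.Ioo (0:ℝ) (1/2) := ⟨hs.1, hs.2.trans_le h1⟩
        exact (f.2.2.2.2.1 s hs').1.hasDerivAt.sub (g.2.2.2.2.1 s hs').1.hasDerivAt)
    have hle := le_dd f g (t := x) ⟨hx.1, hx.2.trans_le h1⟩
    simp only [f.2.2.1, g.2.2.1, sub_self, sub_zero] at hx'
    have e : f.1 t - g.1 t = (deriv f.1 x - deriv g.1 x) * t := by
      rw [hx']; field_simp
    rw [e, abs_mul, abs_of_pos h0]
    nlinarith [abs_nonneg (deriv f.1 x - deriv g.1 x)]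
  rcases le_or_gt t 0 with h | h
  · rw [f.2.2.2.2.2.1 t h, g.2.2.2.2.2.1 t h, f.2.2.1, g.2.2.1, sub_self, abs_zero]
    exact dd_nonneg _ _
  · rcases le_or_gt t (1/2) with h' | h'
    · exact key t h h'
    · rw [f.2.2.2.2.2.2 t h'.le, g.2.2.2.2.2.2 t h'.le]
      exact key _ (by norm_num) le_rfl

@[reducible] noncomputable def mX (ℓ K₂ c : ℝ) : MetricSpace (XX ℓ K₂ c) where
  dist f g := dd f.1 g.1
  dist_self f := by simp [dd]
  dist_comm f g := by simp only [dd, abs_sub_comm]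
  dist_triangle f g h := dd_le fun t ht =>
    (abs_sub_le _ (deriv g.1 t) _).trans (add_le_add (le_dd f g ht) (le_dd g h ht))
  eq_of_dist_eq_zero := by
    intro f g h
    apply Subtype.ext
    funext t
    have h1 := val_le_dd f g t
    have h2 : dd f.1 g.1 = 0 := h
    rw [h2] at h1
    exact sub_eq_zero.1 (abs_nonpos_iff.1 h1)

theorem complete_X (ℓ K₂ c : ℝ) : @CompleteSpace _ (mX ℓ K₂ c).toUniformSpace := by
  letI := mX ℓ K₂ c
  apply Metric.complete_of_cauchySeq_tendsto
  intro u hu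
  have hC : ∀ ε > 0, ∃ N, ∀ m ≥ N, ∀ n ≥ N, dd (u m).1 (u n).1 < ε := Metric.cauchySeq_iff.1 hu
  have hU : UniformCauchySeqOn (fun n t => (u n).1 t) atTop (Set.univ : Set ℝ) := by
    rw [Metric.uniformCauchySeqOn_iff]
    intro ε hε
    obtain ⟨N, hN⟩ := hC ε hε
    exact ⟨N, fun m hm n hn x _ => (val_le_dd _ _ x).trans_lt (hN m hm n hn)⟩
  have hU' : UniformCauchySeqOn (fun n t => deriv (u n).1 t) atTop (Set.Ioo (0 : ℝ) (1/2)) := by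
    rw [Metric.uniformCauchySeqOn_iff]
    intro ε hε
    obtain ⟨N, hN⟩ := hC ε hε
    exact ⟨N, fun m hm n hn x hx => (le_dd _ _ hx).trans_lt (hN m hm n hn)⟩
  have hF : ∀ t : ℝ, ∃ y, Tendsto (fun n => (u n).1 t) atTop (𝓝 y) := fun t =>
    cauchySeq_tendsto_of_complete (hU.cauchy_map (Set.mem_univ t))
  have hG : ∀ t : ℝ, ∃ y, t ∈ Set.Ioo (0:ℝ) (1/2) →
      Tendsto (fun n => deriv (u n).1 t) atTop (𝓝 y) := fun t => by
    by_cases ht : t ∈ Set.Ioo (0:ℝ) (1/2)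
    · obtain ⟨y, hy⟩ := cauchySeq_tendsto_of_complete (hU'.cauchy_map ht)
      exact ⟨y, fun _ => hy⟩
    · exact ⟨0, fun h => absurd h ht⟩
  choose F hF using hF
  choose G hG using hG
  have hFu := hU.tendstoUniformlyOn_of_tendsto (fun x _ => hF x)
  have hGu := hU'.tendstoUniformlyOn_of_tendsto (fun x hx => hG x hx)
  have hder : ∀ t ∈ Set.Ioo (0:ℝ) (1/2), HasDerivAt F (G t) t := fun t ht =>
    hasDerivAt_of_tendstoUniformlyOn isOpen_Ioo hGu
      (Eventually.of_forall fun n x hx => ((u n).2.2.2.2.1 x hx).1.hasDerivAt)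
      (fun x _ => hF x) ht
  refine ⟨⟨F, ?_, ?_, ?_, ?_, ?_, ?_⟩, ?_⟩
  · exact (hFu.mono (Set.subset_univ _)).continuousOn
      (Eventually.of_forall fun n => (u n).2.1).frequently
  · exact tendsto_nhds_unique (hF 0) (by simp only [(u _).2.2.1]; exact tendsto_const_nhds)
  · intro t ht
    exact le_of_tendsto' (hF t).abs fun n => (u n).2.2.2.1 t ht
  · intro t ht
    refine ⟨(hder t ht).differentiableAt, ?_⟩
    rw [(hder t ht).deriv]
    exact le_of_tendsto' (hG t ht).abs fun n => ((u n).2.2.2.2.1 t ht).2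
  · intro t ht
    exact tendsto_nhds_unique (hF t) ((hF 0).congr fun n => ((u n).2.2.2.2.2.1 t ht).symm)
  · intro t ht
    exact tendsto_nhds_unique (hF t) ((hF (1/2)).congr fun n => ((u n).2.2.2.2.2.2 t ht).symm)
  · rw [Metric.tendsto_atTop]
    intro ε hε
    obtain ⟨N, hN⟩ := Metric.tendstoUniformlyOn_iff.1 hGu (ε/2) (half_pos hε)
      |> eventually_atTop.1
    refine ⟨N, fun n hn => ?_⟩
    change dd (u n).1 F < ε
    refine (dd_le (b := ε/2) fun t ht => ?_).trans_lt (half_lt_self hε)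
    rw [(hder t ht).deriv, abs_sub_comm]
    exact (hN n hn t ht).le

end Helpers

/-- The set `X = C^{0,ℓ}_0([0,1/2])` of continuous functions on `[0,1/2]`
with value `c` at `0`, sup-norm bound `K₂`, differentiable on `(0,1/2)` with `|f'| ≤ ℓ`
(functions on `[0,1/2]` are modelled as functions on `ℝ` that are constant to the left
of `0` and to the right of `1/2`), equipped with
`d(f,g) = sup_{t ∈ (0,1/2)} |f'(t) - g'(t)|`, is a complete metric space. -/
theorem complete_metric_space_of_derivative_sup_distance
    (ℓ K₂ c : ℝ) (hℓ : 0 < ℓ) (hK₂ : 0 < K₂) (hc : |c| ≤ K₂) :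
    ∃ m : MetricSpace {f : ℝ → ℝ //
        ContinuousOn f (Set.Icc 0 (1 / 2)) ∧ f 0 = c ∧
        (∀ t ∈ Set.Icc (0 : ℝ) (1 / 2), |f t| ≤ K₂) ∧
        (∀ t ∈ Set.Ioo (0 : ℝ) (1 / 2), DifferentiableAt ℝ f t ∧ |deriv f t| ≤ ℓ) ∧
        (∀ t : ℝ, t ≤ 0 → f t = f 0) ∧ (∀ t : ℝ, 1 / 2 ≤ t → f t = f (1 / 2))},
      (∀ f g, m.toDist.dist f g = dd f.1 g.1) ∧
        @CompleteSpace _ m.toUniformSpace := by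
  exact ⟨mX ℓ K₂ c, fun _ _ => rfl, complete_X ℓ K₂ c⟩
end

section
/- In the setting below, suppose ℓ ≥ τK₀ and |ε| ≤ 1/(2K₂). Then for every w ∈ C^{0,ℓ}_0([0,1/2]): (i) −3/2 ≤ s − 1 + ε w(s) ≤ 0 for all s ∈ [0,1/2], so that O_z(w) is well defined; (ii) O_z(w)(0) = z(0); (iii) sup_{t∈[0,1/2]} |O_z(w)(t)| ≤ K₂; and (iv) O_z(w) is differentiable on (0,1/2) with (O_z(w))′(t) = τ F(z(t − 1 + ε w(t))) and |(O_z(w))′(t)| ≤ τK₀ ≤ ℓ for all t ∈ (0,1/2). In particular O_z maps C^{0,ℓ}_0([0,1/2]) into itself. -/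
/-- `f ∈ C^{0,ℓ}([a,b])`: continuous on `[a,b]`, differentiable on `(a,b)` with `|f'| ≤ ℓ`. -/
def memC (a b ℓ : ℝ) (f : ℝ → ℝ) : Prop :=
  ContinuousOn f (Set.Icc a b) ∧
    ∀ t ∈ Set.Ioo a b, DifferentiableAt ℝ f t ∧ |deriv f t| ≤ ℓ

/-- `f ∈ C^{0,ℓ}_0([0,1/2])` with prescribed value `c` at `0` and sup-norm bound `K₂`. -/
def mem0 (ℓ K₂ c : ℝ) (f : ℝ → ℝ) : Prop :=
  memC 0 (1 / 2) ℓ f ∧ f 0 = c ∧ ∀ t ∈ Set.Icc (0 : ℝ) (1 / 2), |f t| ≤ K₂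

/-- The operator `O_z(w)(t) = z(0) + τ ∫₀ᵗ F (z (s - 1 + ε w s)) ds`. -/
noncomputable def Oz (τ ε : ℝ) (F z w : ℝ → ℝ) : ℝ → ℝ := fun t =>
  z 0 + τ * ∫ s in (0 : ℝ)..t, F (z (s - 1 + ε * w s))

/-- for `ℓ ≥ τK₀` and `|ε| ≤ 1/(2K₂)`, the operator `O_z` is well defined
on `C^{0,ℓ}_0([0,1/2])` and maps it into itself. -/
theorem Oz_well_defined_and_self_map
    (τ M ℓ ε K₀ K₂ : ℝ) (F z : ℝ → ℝ)
    (hτ : 0 < τ) (hM : 1 < M) (hℓpos : 0 < ℓ)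
    (hF : ContDiff ℝ 1 F)
    (hK₀ : K₀ = ⨆ ξ : Set.Icc (-M) M, |F ξ.1|)
    (hK₂ : K₂ = M + τ * K₀ / 2)
    (hz : memC (-(3 / 2)) 0 ℓ z)
    (hzM : ∀ t ∈ Set.Icc (-(3 / 2) : ℝ) 0, |z t| ≤ M)
    (hℓ : τ * K₀ ≤ ℓ)
    (hε : |ε| ≤ 1 / (2 * K₂))
    (w : ℝ → ℝ) (hw : mem0 ℓ K₂ (z 0) w) :
    (∀ s ∈ Set.Icc (0 : ℝ) (1 / 2), s - 1 + ε * w s ∈ Set.Icc (-(3 / 2) : ℝ) 0) ∧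
    Oz τ ε F z w 0 = z 0 ∧
    (∀ t ∈ Set.Icc (0 : ℝ) (1 / 2), |Oz τ ε F z w t| ≤ K₂) ∧
    (∀ t ∈ Set.Ioo (0 : ℝ) (1 / 2),
      HasDerivAt (Oz τ ε F z w) (τ * F (z (t - 1 + ε * w t))) t ∧
      |τ * F (z (t - 1 + ε * w t))| ≤ τ * K₀ ∧ τ * K₀ ≤ ℓ) ∧
    mem0 ℓ K₂ (z 0) (Oz τ ε F z w) := by
  have hbdd : BddAbove (Set.range fun ξ : Set.Icc (-M) M => |F ξ.1|) := by
    have hc : Continuous fun ξ : Set.Icc (-M) M => |F ξ.1| :=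
      (hF.continuous.comp continuous_subtype_val).abs
    exact (isCompact_range hc).bddAbove
  have hFb : ∀ x, |x| ≤ M → |F x| ≤ K₀ := by
    intro x hx
    rw [hK₀]
    exact le_ciSup hbdd (⟨x, abs_le.mp hx⟩ : Set.Icc (-M) M)
  have hK0 : 0 ≤ K₀ := (abs_nonneg _).trans (hFb 0 (by rw [abs_zero]; linarith))
  have hτK : 0 ≤ τ * K₀ := mul_nonneg hτ.le hK0
  have hK2 : 0 < K₂ := by rw [hK₂]; linarith
  obtain ⟨⟨hwc, hwd⟩, hw0, hwb⟩ := hw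
  have hi : ∀ s ∈ Set.Icc (0 : ℝ) (1 / 2), s - 1 + ε * w s ∈ Set.Icc (-(3 / 2) : ℝ) 0 := by
    intro s hs
    have h1 : |ε * w s| ≤ 1 / 2 := by
      rw [abs_mul]
      calc |ε| * |w s| ≤ 1 / (2 * K₂) * K₂ :=
            mul_le_mul hε (hwb s hs) (abs_nonneg _) (by positivity)
        _ = 1 / 2 := by field_simp
    have h2 := abs_le.mp h1
    exact ⟨by linarith [hs.1, h2.1], by linarith [hs.2, h2.2]⟩
  have hgb : ∀ s ∈ Set.Icc (0 : ℝ) (1 / 2), |F (z (s - 1 + ε * w s))| ≤ K₀ :=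
    fun s hs => hFb _ (hzM _ (hi s hs))
  have hgc : ContinuousOn (fun s => F (z (s - 1 + ε * w s))) (Set.Icc (0 : ℝ) (1 / 2)) := by
    have h1 : ContinuousOn (fun s => s - 1 + ε * w s) (Set.Icc (0 : ℝ) (1 / 2)) :=
      (continuousOn_id.sub continuousOn_const).add (continuousOn_const.mul hwc)
    exact hF.continuous.comp_continuousOn (hz.1.comp h1 hi)
  have h0 : Oz τ ε F z w 0 = z 0 := by simp [Oz]
  have hb : ∀ t ∈ Set.Icc (0 : ℝ) (1 / 2), |Oz τ ε F z w t| ≤ K₂ := by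
    intro t ht
    have h1 : ‖∫ s in (0 : ℝ)..t, F (z (s - 1 + ε * w s))‖ ≤ K₀ * |t - 0| := by
      apply intervalIntegral.norm_integral_le_of_norm_le_const
      intro s hs
      rw [Set.uIoc_of_le ht.1] at hs
      exact hgb s ⟨hs.1.le, hs.2.trans ht.2⟩
    rw [Real.norm_eq_abs, sub_zero, abs_of_nonneg ht.1] at h1
    have h2 : |z 0| ≤ M := hzM 0 ⟨by norm_num, le_refl _⟩
    have h3 : K₀ * t ≤ K₀ * (1 / 2) := mul_le_mul_of_nonneg_left ht.2 hK0
    have h4 := mul_le_mul_of_nonneg_left (h1.trans h3) hτ.le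
    have h5 := abs_add_le (z 0) (τ * ∫ s in (0 : ℝ)..t, F (z (s - 1 + ε * w s)))
    rw [abs_mul, abs_of_pos hτ] at h5
    change |z 0 + τ * ∫ s in (0 : ℝ)..t, F (z (s - 1 + ε * w s))| ≤ K₂
    rw [hK₂]
    linarith
  have hd : ∀ t ∈ Set.Ioo (0 : ℝ) (1 / 2),
      HasDerivAt (Oz τ ε F z w) (τ * F (z (t - 1 + ε * w t))) t ∧
      |τ * F (z (t - 1 + ε * w t))| ≤ τ * K₀ ∧ τ * K₀ ≤ ℓ := by
    intro t ht
    refine ⟨?_, ?_, hℓ⟩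
    · have hn : Set.Icc (0 : ℝ) (1 / 2) ∈ nhds t := Icc_mem_nhds ht.1 ht.2
      have hint : IntervalIntegrable (fun s => F (z (s - 1 + ε * w s)))
          MeasureTheory.volume 0 t := by
        apply ContinuousOn.intervalIntegrable_of_Icc ht.1.le
        exact hgc.mono (Set.Icc_subset_Icc_right ht.2.le)
      have hm : StronglyMeasurableAtFilter (fun s => F (z (s - 1 + ε * w s))) (nhds t) :=
        (hgc.mono Set.Ioo_subset_Icc_self).stronglyMeasurableAtFilter isOpen_Ioo t ht
      have := intervalIntegral.integral_hasDerivAt_right hint hm (hgc.continuousAt hn)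
      exact (this.const_mul τ).const_add (z 0)
    · rw [abs_mul, abs_of_pos hτ]
      exact mul_le_mul_of_nonneg_left (hgb t ⟨ht.1.le, ht.2.le⟩) hτ.le
  refine ⟨hi, h0, hb, hd, ⟨?_, ?_⟩, h0, hb⟩
  · have h1 : ContinuousOn (fun t => ∫ s in (0 : ℝ)..t, F (z (s - 1 + ε * w s)))
        (Set.Icc (0 : ℝ) (1 / 2)) := by
      have := intervalIntegral.continuousOn_primitive_interval (μ := MeasureTheory.volume)
        (f := fun s => F (z (s - 1 + ε * w s))) (a := (0 : ℝ)) (b := 1 / 2)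
        (by rw [Set.uIcc_of_le (by norm_num)]; exact hgc.integrableOn_Icc)
      rwa [Set.uIcc_of_le (by norm_num)] at this
    exact continuousOn_const.add (continuousOn_const.mul h1)
  · intro t ht
    obtain ⟨h1, h2, h3⟩ := hd t ht
    exact ⟨h1.differentiableAt, by rw [h1.deriv]; exact h2.trans h3⟩
end

section
/- In the setting below, suppose ℓ ≥ τK₀ and |ε| ≤ 1/(2K₂). Then for all w₁, w₂ ∈ C^{0,ℓ}_0([0,1/2]) and all s ∈ [0,1/2], |G_{w₁}(s) − G_{w₂}(s)| ≤ |ε| ℓ (K₁/2) d(w₁, w₂); that is, sup_{s∈[0,1/2]} |F(z(s − 1 + ε w₁(s))) − F(z(s − 1 + ε w₂(s)))| is bounded by |ε| ℓ K₁/2 times the supremum distance between the derivatives of w₁ and w₂. -/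
theorem mv_aux {a b C : ℝ} {f : ℝ → ℝ} (hf : memC a b C f) :
    ∀ x ∈ Set.Icc a b, ∀ y ∈ Set.Icc a b, |f x - f y| ≤ C * |x - y| := by
  have key : ∀ x ∈ Set.Icc a b, ∀ y ∈ Set.Icc a b, x < y → |f x - f y| ≤ C * |x - y| := by
    intro x hx y hy hxy
    obtain ⟨c, hc, hd⟩ := exists_deriv_eq_slope f hxy
      (hf.1.mono (Set.Icc_subset_Icc hx.1 hy.2))
      (fun t ht => (hf.2 t ⟨lt_of_le_of_lt hx.1 ht.1, lt_of_lt_of_le ht.2 hy.2⟩).1.differentiableWithinAt)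
    have h := (hf.2 c ⟨lt_of_le_of_lt hx.1 hc.1, lt_of_lt_of_le hc.2 hy.2⟩).2
    have hne : y - x ≠ 0 := (sub_pos.2 hxy).ne'
    have e : f y - f x = deriv f c * (y - x) := by rw [hd]; field_simp
    rw [abs_sub_comm, e, abs_mul, abs_sub_comm x y]
    exact mul_le_mul_of_nonneg_right h (abs_nonneg _)
  intro x hx y hy
  rcases lt_trichotomy x y with h | h | h
  · exact key x hx y hy h
  · simp [h]
  · rw [abs_sub_comm, abs_sub_comm x y]; exact key y hy x hx h

/-- for `ℓ ≥ τK₀` and `|ε| ≤ 1/(2K₂)`, for all `w₁, w₂ ∈ C^{0,ℓ}_0([0,1/2])`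
and `s ∈ [0,1/2]`, `|G_{w₁}(s) - G_{w₂}(s)| ≤ |ε| ℓ (K₁/2) d(w₁,w₂)`. -/
theorem Gw_lipschitz_estimate
    (τ M ℓ ε K₀ K₁ K₂ : ℝ) (F z : ℝ → ℝ)
    (hτ : 0 < τ) (hM : 1 < M) (hℓpos : 0 < ℓ)
    (hF : ContDiff ℝ 1 F)
    (hK₀ : K₀ = ⨆ ξ : Set.Icc (-M) M, |F ξ.1|)
    (hK₁ : K₁ = ⨆ ξ : Set.Icc (-M) M, |deriv F ξ.1|)
    (hK₂ : K₂ = M + τ * K₀ / 2)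
    (hz : memC (-(3 / 2)) 0 ℓ z)
    (hzM : ∀ t ∈ Set.Icc (-(3 / 2) : ℝ) 0, |z t| ≤ M)
    (hℓ : τ * K₀ ≤ ℓ)
    (hε : |ε| ≤ 1 / (2 * K₂))
    (w₁ w₂ : ℝ → ℝ) (hw₁ : mem0 ℓ K₂ (z 0) w₁) (hw₂ : mem0 ℓ K₂ (z 0) w₂) :
    ∀ s ∈ Set.Icc (0 : ℝ) (1 / 2),
      |F (z (s - 1 + ε * w₁ s)) - F (z (s - 1 + ε * w₂ s))| ≤
        |ε| * ℓ * (K₁ / 2) * dd w₁ w₂ := by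
  intro s hs
  have hbF : ∀ g : ℝ → ℝ, Continuous g →
      BddAbove (Set.range fun ξ : Set.Icc (-M) M => |g ξ.1|) := by
    intro g hg
    have : Continuous fun ξ : Set.Icc (-M) M => |g ξ.1| := by fun_prop
    exact (isCompact_range this).bddAbove
  have hdF : Continuous (deriv F) := hF.continuous_deriv le_rfl
  have hK₀n : 0 ≤ K₀ := by rw [hK₀]; exact Real.iSup_nonneg fun _ => abs_nonneg _
  have hK₁n : 0 ≤ K₁ := by rw [hK₁]; exact Real.iSup_nonneg fun _ => abs_nonneg _
  have hK₂p : 0 < K₂ := by rw [hK₂]; have := mul_nonneg hτ.le hK₀n; linarith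
  have hFm : memC (-M) M K₁ F := by
    refine ⟨hF.continuous.continuousOn, fun t ht => ⟨hF.differentiable one_ne_zero t, ?_⟩⟩
    rw [hK₁]
    exact le_ciSup (hbF _ hdF) ⟨t, ht.1.le, ht.2.le⟩
  have hin : ∀ w, mem0 ℓ K₂ (z 0) w → s - 1 + ε * w s ∈ Set.Icc (-(3 / 2) : ℝ) 0 := by
    intro w hw
    have h1 : |ε * w s| ≤ 1 / 2 := by
      rw [abs_mul]
      calc |ε| * |w s| ≤ 1 / (2 * K₂) * K₂ :=
            mul_le_mul hε (hw.2.2 s hs) (abs_nonneg _) (by positivity)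
        _ = 1 / 2 := by field_simp
    have h2 := abs_le.1 h1
    constructor <;> linarith [hs.1, hs.2]
  have hwm : memC 0 (1 / 2) (dd w₁ w₂) (fun t => w₁ t - w₂ t) := by
    refine ⟨hw₁.1.1.sub hw₂.1.1, fun t ht => ?_⟩
    have h1 := hw₁.1.2 t ht
    have h2 := hw₂.1.2 t ht
    refine ⟨h1.1.sub h2.1, ?_⟩
    rw [deriv_fun_sub h1.1 h2.1]
    have hb : BddAbove (Set.range fun t : Set.Ioo (0 : ℝ) (1 / 2) =>
        |deriv w₁ t.1 - deriv w₂ t.1|) := by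
      refine ⟨ℓ + ℓ, ?_⟩
      rintro _ ⟨u, rfl⟩
      exact (abs_sub _ _).trans (add_le_add (hw₁.1.2 u.1 u.2).2 (hw₂.1.2 u.1 u.2).2)
    exact le_ciSup hb ⟨t, ht⟩
  have hdn : 0 ≤ dd w₁ w₂ := Real.iSup_nonneg fun _ => abs_nonneg _
  have hw : |w₁ s - w₂ s| ≤ dd w₁ w₂ * (1 / 2) := by
    have h := mv_aux hwm s hs 0 (by norm_num)
    simp only [hw₁.2.1, hw₂.2.1, sub_self, sub_zero, abs_of_nonneg hs.1] at h
    exact h.trans (mul_le_mul_of_nonneg_left hs.2 hdn)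
  have i1 := hin w₁ hw₁
  have i2 := hin w₂ hw₂
  have hz' := mv_aux hz _ i1 _ i2
  have hF' := mv_aux hFm _ (abs_le.1 (hzM _ i1)) _ (abs_le.1 (hzM _ i2))
  have e : s - 1 + ε * w₁ s - (s - 1 + ε * w₂ s) = ε * (w₁ s - w₂ s) := by ring
  rw [e, abs_mul] at hz'
  calc _ ≤ _ := hF'
    _ ≤ K₁ * (ℓ * (|ε| * (dd w₁ w₂ * (1 / 2)))) := by
      refine mul_le_mul_of_nonneg_left (hz'.trans ?_) hK₁n
      gcongr
    _ = _ := by ring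
end

section
/- (Proposition 1) In the setting below, suppose ℓ ≥ τK₀. There exists ε₀ > 0, depending only on τ, ℓ, M and F (one may take ε₀ = min{1/(2K₂), 1/(τℓK₁)} when K₁ > 0, and ε₀ = 1/(2K₂) when K₁ = 0), such that for every ε with |ε| ≤ ε₀ and every z ∈ C^{0,ℓ}([−3/2,0]) with sup_{[−3/2,0]}|z| ≤ M, the operator O_z maps C^{0,ℓ}_0([0,1/2]) into itself and is a contraction: for all w₁, w₂ ∈ C^{0,ℓ}_0([0,1/2]), d(O_z(w₁), O_z(w₂)) ≤ (1/2) d(w₁, w₂). -/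
theorem lip_aux {a b L : ℝ} {f : ℝ → ℝ} (h : memC a b L f) {x y : ℝ}
    (hx : x ∈ Set.Icc a b) (hy : y ∈ Set.Icc a b) : |f x - f y| ≤ L * |x - y| := by
  wlog hxy : y ≤ x generalizing x y
  · rw [abs_sub_comm (f x), abs_sub_comm x]
    exact this hy hx (le_of_not_ge hxy)
  rcases hxy.eq_or_lt with rfl | hlt
  · simp
  obtain ⟨c, hc, hc'⟩ := exists_deriv_eq_slope f hlt
    (h.1.mono (Set.Icc_subset_Icc hy.1 hx.2))
    (fun t ht => (h.2 t ⟨hy.1.trans_lt ht.1, ht.2.trans_le hx.2⟩).1.differentiableWithinAt)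
  have h1 := (h.2 c ⟨hy.1.trans_lt hc.1, hc.2.trans_le hx.2⟩).2
  have hpos : 0 < x - y := sub_pos.2 hlt
  have h2 : f x - f y = deriv f c * (x - y) := by
    rw [hc']; field_simp
  rw [h2, abs_mul]
  exact mul_le_mul_of_nonneg_right h1 (abs_nonneg _)

theorem sup_aux {M : ℝ} {g : ℝ → ℝ} (hg : Continuous g) {x : ℝ} (hx : |x| ≤ M) :
    |g x| ≤ ⨆ ξ : Set.Icc (-M) M, |g ξ.1| := by
  have hb : BddAbove (Set.range fun ξ : Set.Icc (-M) M => |g ξ.1|) :=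
    (isCompact_range (by fun_prop)).bddAbove
  exact le_ciSup hb ⟨x, abs_le.1 hx⟩

theorem arg_aux {ε K t v : ℝ} (hK : 0 < K) (hε : |ε| ≤ 1 / (2 * K)) (hv : |v| ≤ K)
    (ht : t ∈ Set.Icc (0:ℝ) (1/2)) : t - 1 + ε * v ∈ Set.Icc (-(3/2) : ℝ) 0 := by
  have h : |ε * v| ≤ 1 / 2 := by
    rw [abs_mul]
    calc |ε| * |v| ≤ 1 / (2 * K) * K := by gcongr
      _ = 1 / 2 := by field_simp
  have := abs_le.1 h
  constructor <;> linarith [ht.1, ht.2, this.1, this.2]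

theorem cont_aux {ε K L c : ℝ} {F z w : ℝ → ℝ} (hF : Continuous F) (hK : 0 < K)
    (hε : |ε| ≤ 1 / (2 * K)) (hz : memC (-(3 / 2)) 0 L z) (hw : mem0 L K c w) :
    ContinuousOn (fun s => F (z (s - 1 + ε * w s))) (Set.Icc 0 (1/2)) := by
  refine hF.comp_continuousOn (hz.1.comp ?_ ?_)
  · have := hw.1.1
    fun_prop
  · intro t ht
    exact arg_aux hK hε (hw.2.2 t ht) ht

theorem deriv_aux {τ ε K L c : ℝ} {F z w : ℝ → ℝ} (hF : Continuous F) (hK : 0 < K)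
    (hε : |ε| ≤ 1 / (2 * K)) (hz : memC (-(3 / 2)) 0 L z) (hw : mem0 L K c w)
    {t : ℝ} (ht : t ∈ Set.Ioo (0:ℝ) (1/2)) :
    HasDerivAt (Oz τ ε F z w) (τ * F (z (t - 1 + ε * w t))) t := by
  have hc := cont_aux hF hK hε hz hw
  have hc' := hc.mono Set.Ioo_subset_Icc_self
  have hi : IntervalIntegrable (fun s => F (z (s - 1 + ε * w s))) MeasureTheory.volume 0 t := by
    apply ContinuousOn.intervalIntegrable
    rw [Set.uIcc_of_le ht.1.le]
    exact hc.mono (Set.Icc_subset_Icc le_rfl ht.2.le)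
  have := intervalIntegral.integral_hasDerivAt_right hi
    (hc'.stronglyMeasurableAtFilter isOpen_Ioo t ht) (hc'.continuousAt (isOpen_Ioo.mem_nhds ht))
  exact (this.const_mul τ).const_add (z 0)

/-- Proposition 1: for `ℓ ≥ τK₀` there is `ε₀ > 0` (one may take
`ε₀ = min (1/(2K₂)) (1/(τℓK₁))` when `K₁ > 0` and `ε₀ = 1/(2K₂)` when `K₁ = 0`) such
that for `|ε| ≤ ε₀` and every admissible history `z`, the operator `O_z` maps
`C^{0,ℓ}_0([0,1/2])` into itself and is a `1/2`-contraction for the distance `d`. -/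
theorem Oz_contraction
    (τ M ℓ K₀ K₁ K₂ : ℝ) (F : ℝ → ℝ)
    (hτ : 0 < τ) (hM : 1 < M) (hℓpos : 0 < ℓ)
    (hF : ContDiff ℝ 1 F)
    (hK₀ : K₀ = ⨆ ξ : Set.Icc (-M) M, |F ξ.1|)
    (hK₁ : K₁ = ⨆ ξ : Set.Icc (-M) M, |deriv F ξ.1|)
    (hK₂ : K₂ = M + τ * K₀ / 2)
    (hℓ : τ * K₀ ≤ ℓ) :
    ∃ ε₀ : ℝ, 0 < ε₀ ∧
      ε₀ = (if 0 < K₁ then min (1 / (2 * K₂)) (1 / (τ * ℓ * K₁)) else 1 / (2 * K₂)) ∧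
      ∀ ε : ℝ, |ε| ≤ ε₀ →
        ∀ z : ℝ → ℝ, memC (-(3 / 2)) 0 ℓ z →
          (∀ t ∈ Set.Icc (-(3 / 2) : ℝ) 0, |z t| ≤ M) →
          (∀ w, mem0 ℓ K₂ (z 0) w → mem0 ℓ K₂ (z 0) (Oz τ ε F z w)) ∧
          ∀ w₁ w₂, mem0 ℓ K₂ (z 0) w₁ → mem0 ℓ K₂ (z 0) w₂ →
            dd (Oz τ ε F z w₁) (Oz τ ε F z w₂) ≤ (1 / 2) * dd w₁ w₂ := by
  have hFc : Continuous F := hF.continuous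
  have hF'c : Continuous (deriv F) := hF.continuous_deriv le_rfl
  have hFb : ∀ x, |x| ≤ M → |F x| ≤ K₀ := fun x hx => hK₀ ▸ sup_aux hFc hx
  have hF'b : ∀ x, |x| ≤ M → |deriv F x| ≤ K₁ := fun x hx => hK₁ ▸ sup_aux hF'c hx
  have h0M : |(0:ℝ)| ≤ M := by simp; linarith
  have hK₀n : 0 ≤ K₀ := (abs_nonneg _).trans (hFb 0 h0M)
  have hK₁n : 0 ≤ K₁ := (abs_nonneg _).trans (hF'b 0 h0M)
  have hK₂p : 0 < K₂ := by rw [hK₂]; positivity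
  refine ⟨_, ?_, rfl, ?_⟩
  · split_ifs with h
    · exact lt_min (by positivity) (by positivity)
    · positivity
  intro ε hε z hz hzM
  have hε1 : |ε| ≤ 1 / (2 * K₂) := by
    split_ifs at hε with h
    · exact hε.trans (min_le_left _ _)
    · exact hε
  have hε2 : τ * (K₁ * (ℓ * |ε|)) ≤ 1 := by
    split_ifs at hε with h
    · have h2 := hε.trans (min_le_right _ _)
      rw [le_div_iff₀ (by positivity)] at h2
      linarith
    · have : K₁ = 0 := le_antisymm (not_lt.1 h) hK₁n
      simp [this]
  have hIb : ∀ w, mem0 ℓ K₂ (z 0) w → ∀ t ∈ Set.Icc (0:ℝ) (1/2),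
      |F (z (t - 1 + ε * w t))| ≤ K₀ := fun w hw t ht =>
    hFb _ (hzM _ (arg_aux hK₂p hε1 (hw.2.2 t ht) ht))
  refine ⟨fun w hw => ⟨⟨?_, fun t ht => ?_⟩, by simp [Oz], fun t ht => ?_⟩, ?_⟩
  · have hc := cont_aux hFc hK₂p hε1 hz hw
    have hi : MeasureTheory.IntegrableOn (fun s => F (z (s - 1 + ε * w s)))
        (Set.uIcc 0 (1/2)) MeasureTheory.volume := by
      rw [Set.uIcc_of_le (by norm_num)]
      exact hc.integrableOn_Icc
    have := intervalIntegral.continuousOn_primitive_interval hi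
    rw [Set.uIcc_of_le (by norm_num)] at this
    unfold Oz
    exact continuousOn_const.add (continuousOn_const.mul this)
  · have hd := deriv_aux (τ := τ) hFc hK₂p hε1 hz hw ht
    refine ⟨hd.differentiableAt, ?_⟩
    rw [hd.deriv, abs_mul, abs_of_pos hτ]
    exact (mul_le_mul_of_nonneg_left (hIb w hw t ⟨ht.1.le, ht.2.le⟩) hτ.le).trans hℓ
  · have h1 : |∫ s in (0:ℝ)..t, F (z (s - 1 + ε * w s))| ≤ K₀ * |t - 0| := by
      rw [← Real.norm_eq_abs]
      apply intervalIntegral.norm_integral_le_of_norm_le_const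
      intro s hs
      rw [Set.uIoc_of_le ht.1] at hs
      exact hIb w hw s ⟨hs.1.le, hs.2.trans ht.2⟩
    rw [sub_zero, abs_of_nonneg ht.1] at h1
    have h2 : K₀ * t ≤ K₀ * (1/2) := mul_le_mul_of_nonneg_left ht.2 hK₀n
    have h3 : |z 0| ≤ M := hzM 0 (by norm_num)
    have h4 := mul_le_mul_of_nonneg_left (h1.trans h2) hτ.le
    calc |Oz τ ε F z w t| ≤ |z 0| + |τ * ∫ s in (0:ℝ)..t, F (z (s - 1 + ε * w s))| :=
          abs_add_le _ _
      _ ≤ K₂ := by rw [abs_mul, abs_of_pos hτ, hK₂]; linarith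
  · intro w₁ w₂ hw₁ hw₂
    have hne : Nonempty (Set.Ioo (0:ℝ) (1/2)) := ⟨⟨1/4, by norm_num⟩⟩
    have hb : BddAbove (Set.range fun t : Set.Ioo (0:ℝ) (1/2) =>
        |deriv w₁ t.1 - deriv w₂ t.1|) := by
      refine ⟨ℓ + ℓ, ?_⟩
      rintro _ ⟨t, rfl⟩
      exact (abs_sub _ _).trans (add_le_add (hw₁.1.2 t.1 t.2).2 (hw₂.1.2 t.1 t.2).2)
    have hdiff : memC 0 (1/2) (dd w₁ w₂) (fun t => w₁ t - w₂ t) := by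
      refine ⟨hw₁.1.1.sub hw₂.1.1, fun t ht => ?_⟩
      have hd1 := (hw₁.1.2 t ht).1
      have hd2 := (hw₂.1.2 t ht).1
      refine ⟨hd1.sub hd2, ?_⟩
      rw [(hd1.hasDerivAt.fun_sub hd2.hasDerivAt).deriv]
      exact le_ciSup hb ⟨t, ht⟩
    have hFm : memC (-M) M K₁ F := ⟨hFc.continuousOn, fun t ht =>
      ⟨(hF.differentiable one_ne_zero) t, hF'b t (abs_le.2 ⟨ht.1.le, ht.2.le⟩)⟩⟩
    refine ciSup_le fun ⟨t, ht⟩ => ?_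
    have ht' : t ∈ Set.Icc (0:ℝ) (1/2) := ⟨ht.1.le, ht.2.le⟩
    have hdn : 0 ≤ dd w₁ w₂ := (abs_nonneg _).trans (le_ciSup hb ⟨t, ht⟩)
    simp only
    rw [(deriv_aux (τ := τ) hFc hK₂p hε1 hz hw₁ ht).deriv,
      (deriv_aux (τ := τ) hFc hK₂p hε1 hz hw₂ ht).deriv, ← mul_sub, abs_mul, abs_of_pos hτ]
    have ha1 := arg_aux hK₂p hε1 (hw₁.2.2 t ht') ht'
    have ha2 := arg_aux hK₂p hε1 (hw₂.2.2 t ht') ht'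
    have e1 := lip_aux hFm (abs_le.1 (hzM _ ha1)) (abs_le.1 (hzM _ ha2))
    have e2 := lip_aux hz ha1 ha2
    have e3 := lip_aux hdiff ht' (y := 0) (by norm_num)
    simp only [hw₁.2.1, hw₂.2.1, sub_self, sub_zero] at e3
    rw [abs_of_nonneg ht'.1] at e3
    have e4 : t - 1 + ε * w₁ t - (t - 1 + ε * w₂ t) = ε * (w₁ t - w₂ t) := by ring
    rw [e4, abs_mul] at e2
    calc τ * |F (z (t - 1 + ε * w₁ t)) - F (z (t - 1 + ε * w₂ t))|
        ≤ τ * (K₁ * (ℓ * (|ε| * |w₁ t - w₂ t|))) := by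
          gcongr
          exact e1.trans (by gcongr)
      _ = τ * (K₁ * (ℓ * |ε|)) * |w₁ t - w₂ t| := by ring
      _ ≤ 1 * |w₁ t - w₂ t| := by gcongr
      _ ≤ dd w₁ w₂ * t := by rw [one_mul]; exact e3
      _ ≤ dd w₁ w₂ * (1/2) := by gcongr; exact ht'.2
      _ = 1 / 2 * dd w₁ w₂ := by ring
end

section
/- (Half-Stroboscopic map) In the setting below, suppose ℓ ≥ τK₀ and |ε| ≤ ε₀, where ε₀ = min{1/(2K₂), 1/(τℓK₁)} if K₁ > 0 and ε₀ = 1/(2K₂) otherwise. Then for every z ∈ C^{0,ℓ}([−3/2,0]) with sup_{[−3/2,0]}|z| ≤ M there exists a unique function Ψ ∈ C^{0,ℓ}_0([0,1/2]) satisfying the fixed point equation Ψ(t) = z(0) + τ ∫₀ᵗ F(z(s − 1 + ε Ψ(s))) ds for all t ∈ [0,1/2]. -/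
lemma memC_lip {a b l : ℝ} {z : ℝ → ℝ} (hz : memC a b l z) {x y : ℝ}
    (hx : x ∈ Set.Icc a b) (hy : y ∈ Set.Icc a b) : |z x - z y| ≤ l * |x - y| := by
  have key : ∀ u v : ℝ, u ∈ Set.Icc a b → v ∈ Set.Icc a b → u < v →
      |z v - z u| ≤ l * |v - u| := by
    intro u v hu hv huv
    have hsub : Set.Ioo u v ⊆ Set.Ioo a b := Set.Ioo_subset_Ioo hu.1 hv.2
    obtain ⟨c, hc, h⟩ := exists_deriv_eq_slope z huv
      (hz.1.mono (Set.Icc_subset_Icc hu.1 hv.2))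
      (fun t ht => (hz.2 t (hsub ht)).1.differentiableWithinAt)
    have h2 := (hz.2 c (hsub hc)).2
    have h3 : z v - z u = deriv z c * (v - u) := by
      rw [h]; field_simp [(sub_pos.2 huv).ne']
    rw [h3, abs_mul]
    gcongr
  rcases lt_trichotomy x y with h | h | h
  · rw [abs_sub_comm, abs_sub_comm x y]; exact key x y hx hy h
  · simp [h]
  · exact key y x hy hx h

/-- Picard fixed point for a globally Lipschitz right-hand side. -/
lemma picard_aux (τ ε c L : ℝ) (G : ℝ → ℝ) (hτ : 0 < τ) (hG : Continuous G)
    (hL : ∀ x y, |G x - G y| ≤ L * |x - y|) (hsm : τ * L * |ε| ≤ 1) (hL0 : 0 ≤ L) :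
    ∃ w : ℝ → ℝ, Continuous w ∧
      (∀ t ∈ Set.Icc (0 : ℝ) (1 / 2), w t = c + τ * ∫ s in (0 : ℝ)..t, G (s - 1 + ε * w s)) ∧
      ∀ v : ℝ → ℝ, ContinuousOn v (Set.Icc (0 : ℝ) (1 / 2)) →
        (∀ t ∈ Set.Icc (0 : ℝ) (1 / 2), v t = c + τ * ∫ s in (0 : ℝ)..t, G (s - 1 + ε * v s)) →
        ∀ t ∈ Set.Icc (0 : ℝ) (1 / 2), v t = w t := by
  have h01 : (0 : ℝ) ≤ 1 / 2 := by norm_num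
  let E : C(Set.Icc (0 : ℝ) (1 / 2), ℝ) → ℝ → ℝ := fun w => Set.IccExtend h01 w
  have hE : ∀ w, Continuous (E w) := fun w => w.continuous.Icc_extend'
  have hgc : ∀ w, Continuous (fun s => G (s - 1 + ε * E w s)) := by
    intro w; have := hE w; fun_prop
  have hic : ∀ w, Continuous (fun t => c + τ * ∫ s in (0 : ℝ)..t, G (s - 1 + ε * E w s)) := by
    intro w
    have := intervalIntegral.continuous_primitive (μ := MeasureTheory.volume)
      (fun a b => (hgc w).intervalIntegrable a b) (0 : ℝ)
    fun_prop
  let T : C(Set.Icc (0 : ℝ) (1 / 2), ℝ) → C(Set.Icc (0 : ℝ) (1 / 2), ℝ) := fun w =>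
    ⟨fun t => c + τ * ∫ s in (0 : ℝ)..t.1, G (s - 1 + ε * E w s),
      (hic w).comp continuous_subtype_val⟩
  have hT : ContractingWith (1 / 2) T := by
    refine ⟨by rw [← NNReal.coe_lt_coe]; norm_num, LipschitzWith.of_dist_le_mul fun u v => ?_⟩
    rw [ContinuousMap.dist_le (by positivity)]
    intro t
    have hEd : ∀ s, |E u s - E v s| ≤ dist u v := fun s =>
      ContinuousMap.dist_apply_le_dist (f := u) (g := v) (Set.projIcc 0 (1 / 2) h01 s)
    have h1 : (∫ s in (0 : ℝ)..t.1, G (s - 1 + ε * E u s)) -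
        (∫ s in (0 : ℝ)..t.1, G (s - 1 + ε * E v s)) =
        ∫ s in (0 : ℝ)..t.1, (G (s - 1 + ε * E u s) - G (s - 1 + ε * E v s)) :=
      (intervalIntegral.integral_sub ((hgc u).intervalIntegrable _ _)
        ((hgc v).intervalIntegrable _ _)).symm
    have h2 : ‖∫ s in (0 : ℝ)..t.1, (G (s - 1 + ε * E u s) - G (s - 1 + ε * E v s))‖ ≤
        (L * (|ε| * dist u v)) * |t.1 - 0| := by
      apply intervalIntegral.norm_integral_le_of_norm_le_const
      intro s _
      refine (hL _ _).trans ?_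
      rw [show s - 1 + ε * E u s - (s - 1 + ε * E v s) = ε * (E u s - E v s) by ring, abs_mul]
      have := hEd s
      gcongr
    rw [Real.norm_eq_abs, sub_zero, abs_of_nonneg t.2.1] at h2
    have h3 : dist (T u t) (T v t) = τ * |∫ s in (0 : ℝ)..t.1,
        (G (s - 1 + ε * E u s) - G (s - 1 + ε * E v s))| := by
      rw [← h1, Real.dist_eq, show ∀ x : ℝ, τ * |x| = |τ * x| from fun x => by rw [abs_mul, abs_of_pos hτ]]
      congr 1
      simp only [T, ContinuousMap.coe_mk]
      ring
    rw [h3]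
    have hd : 0 ≤ dist u v := dist_nonneg
    calc _ ≤ τ * (L * (|ε| * dist u v) * t.1) := by gcongr
      _ ≤ τ * (L * (|ε| * dist u v) * (1 / 2)) := by gcongr; exact t.2.2
      _ = (τ * L * |ε|) * (1 / 2 * dist u v) := by ring
      _ ≤ 1 * (1 / 2 * dist u v) := by gcongr
      _ = _ := by push_cast; ring
  have hEeq : ∀ w, ∀ t (ht : t ∈ Set.Icc (0 : ℝ) (1 / 2)), E w t = w ⟨t, ht⟩ :=
    fun w t ht => Set.IccExtend_of_mem h01 w ht
  have : Nonempty C(Set.Icc (0 : ℝ) (1 / 2), ℝ) := ⟨0⟩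
  refine ⟨E (ContractingWith.fixedPoint T hT), hE _, ?_, ?_⟩
  · intro t ht
    have := congrArg (fun f : C(Set.Icc (0 : ℝ) (1 / 2), ℝ) => f ⟨t, ht⟩) hT.fixedPoint_isFixedPt
    rw [hEeq _ t ht]
    exact this.symm
  · intro v hv hveq t ht
    let V : C(Set.Icc (0 : ℝ) (1 / 2), ℝ) := ⟨fun t => v t.1, hv.domRestrict⟩
    have hfix : Function.IsFixedPt T V := by
      ext t
      change c + τ * ∫ s in (0 : ℝ)..t.1, G (s - 1 + ε * E V s) = v t.1
      rw [hveq t.1 t.2]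
      congr 2
      apply intervalIntegral.integral_congr
      intro s hs
      rw [Set.uIcc_of_le t.2.1] at hs
      have : E V s = v s := hEeq V s ⟨hs.1, hs.2.trans t.2.2⟩
      simp only [this]
    rw [← hT.fixedPoint_unique hfix, hEeq V t ht]
    rfl

/-- Half-Stroboscopic map: for `ℓ ≥ τK₀` and `|ε| ≤ ε₀`, with
`ε₀ = min (1/(2K₂)) (1/(τℓK₁))` if `K₁ > 0` and `ε₀ = 1/(2K₂)` otherwise, every
admissible history `z` admits a unique `Ψ ∈ C^{0,ℓ}_0([0,1/2])` with
`Ψ(t) = z(0) + τ ∫₀ᵗ F (z (s - 1 + ε Ψ s)) ds` on `[0,1/2]`. -/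
theorem half_stroboscopic_map_exists_unique
    (τ M ℓ ε ε₀ K₀ K₁ K₂ : ℝ) (F : ℝ → ℝ)
    (hτ : 0 < τ) (hM : 1 < M) (hℓpos : 0 < ℓ)
    (hF : ContDiff ℝ 1 F)
    (hK₀ : K₀ = ⨆ ξ : Set.Icc (-M) M, |F ξ.1|)
    (hK₁ : K₁ = ⨆ ξ : Set.Icc (-M) M, |deriv F ξ.1|)
    (hK₂ : K₂ = M + τ * K₀ / 2)
    (hℓ : τ * K₀ ≤ ℓ)
    (hε₀ : ε₀ = (if 0 < K₁ then min (1 / (2 * K₂)) (1 / (τ * ℓ * K₁)) else 1 / (2 * K₂)))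
    (hε : |ε| ≤ ε₀)
    (z : ℝ → ℝ) (hz : memC (-(3 / 2)) 0 ℓ z)
    (hzM : ∀ t ∈ Set.Icc (-(3 / 2) : ℝ) 0, |z t| ≤ M) :
    ∃ Ψ : ℝ → ℝ,
      (mem0 ℓ K₂ (z 0) Ψ ∧
        ∀ t ∈ Set.Icc (0 : ℝ) (1 / 2),
          Ψ t = z 0 + τ * ∫ s in (0 : ℝ)..t, F (z (s - 1 + ε * Ψ s))) ∧
      ∀ Ψ' : ℝ → ℝ,
        (mem0 ℓ K₂ (z 0) Ψ' ∧
          ∀ t ∈ Set.Icc (0 : ℝ) (1 / 2),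
            Ψ' t = z 0 + τ * ∫ s in (0 : ℝ)..t, F (z (s - 1 + ε * Ψ' s))) →
        ∀ t ∈ Set.Icc (0 : ℝ) (1 / 2), Ψ' t = Ψ t := by
  have hM0 : -M ≤ M := by linarith
  have hFb : ∀ x ∈ Set.Icc (-M) M, |F x| ≤ K₀ := by
    intro x hx
    have hb : BddAbove (Set.range fun ξ : Set.Icc (-M) M => |F ξ.1|) := by
      have hc := hF.continuous
      exact (isCompact_range (by fun_prop)).bddAbove
    rw [hK₀]; exact le_ciSup hb ⟨x, hx⟩
  have hFb1 : ∀ x ∈ Set.Icc (-M) M, |deriv F x| ≤ K₁ := by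
    intro x hx
    have hb : BddAbove (Set.range fun ξ : Set.Icc (-M) M => |deriv F ξ.1|) := by
      have hc := hF.continuous_deriv le_rfl
      exact (isCompact_range (by fun_prop)).bddAbove
    rw [hK₁]; exact le_ciSup hb ⟨x, hx⟩
  have hm : (0 : ℝ) ∈ Set.Icc (-M) M := ⟨by linarith, by linarith⟩
  have hK0 : 0 ≤ K₀ := (abs_nonneg _).trans (hFb 0 hm)
  have hK1 : 0 ≤ K₁ := (abs_nonneg _).trans (hFb1 0 hm)
  have hFl : memC (-M) M K₁ F := ⟨hF.continuous.continuousOn, fun t ht =>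
    ⟨(hF.differentiable one_ne_zero).differentiableAt, hFb1 t (Set.Ioo_subset_Icc_self ht)⟩⟩
  have hK2 : 0 < K₂ := by rw [hK₂]; positivity
  have hε1 : |ε| ≤ 1 / (2 * K₂) := by
    rw [hε₀] at hε
    split_ifs at hε
    · exact hε.trans (min_le_left _ _)
    · exact hε
  have hsm : τ * (K₁ * ℓ) * |ε| ≤ 1 := by
    rcases hK1.eq_or_lt with h | h
    · rw [← h]; simp
    · rw [hε₀, if_pos h] at hε
      have h2 := hε.trans (min_le_right _ _)
      rw [le_div_iff₀ (by positivity)] at h2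
      linarith
  have h30 : (-(3 / 2) : ℝ) ≤ 0 := by norm_num
  let P : ℝ → ℝ := fun x => (Set.projIcc (-(3 / 2) : ℝ) 0 h30 x : ℝ)
  have hPm : ∀ x, P x ∈ Set.Icc (-(3 / 2) : ℝ) 0 := fun x => (Set.projIcc _ _ h30 x).2
  have hPl : ∀ x y, |P x - P y| ≤ |x - y| := fun x y => Set.abs_projIcc_sub_projIcc h30
  have hPe : ∀ x ∈ Set.Icc (-(3 / 2) : ℝ) 0, P x = x := fun x hx => by
    simp only [P, Set.projIcc_of_mem h30 hx]
  have hzm : ∀ x, z (P x) ∈ Set.Icc (-M) M := fun x => abs_le.1 (hzM _ (hPm x))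
  let G : ℝ → ℝ := fun x => F (z (P x))
  have hGl : ∀ x y, |G x - G y| ≤ K₁ * ℓ * |x - y| := by
    intro x y
    calc |G x - G y| ≤ K₁ * |z (P x) - z (P y)| := memC_lip hFl (hzm x) (hzm y)
      _ ≤ K₁ * (ℓ * |P x - P y|) := by gcongr; exact memC_lip hz (hPm x) (hPm y)
      _ ≤ K₁ * (ℓ * |x - y|) := mul_le_mul_of_nonneg_left (mul_le_mul_of_nonneg_left (hPl x y) hℓpos.le) hK1
      _ = _ := by ring
  have hGc : Continuous G := by
    have : LipschitzWith (Real.toNNReal (K₁ * ℓ)) G := LipschitzWith.of_dist_le_mul fun x y => by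
      rw [Real.coe_toNNReal _ (by positivity)]
      exact hGl x y
    exact this.continuous
  have hGb : ∀ x, |G x| ≤ K₀ := fun x => hFb _ (hzm x)
  have harg : ∀ w : ℝ → ℝ, (∀ t ∈ Set.Icc (0 : ℝ) (1 / 2), |w t| ≤ K₂) →
      ∀ t ∈ Set.Icc (0 : ℝ) (1 / 2), ∫ s in (0 : ℝ)..t, F (z (s - 1 + ε * w s)) =
        ∫ s in (0 : ℝ)..t, G (s - 1 + ε * w s) := by
    intro w hw t ht
    apply intervalIntegral.integral_congr
    intro s hs
    rw [Set.uIcc_of_le ht.1] at hs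
    have hs' : s ∈ Set.Icc (0 : ℝ) (1 / 2) := ⟨hs.1, hs.2.trans ht.2⟩
    have h1 : |ε * w s| ≤ 1 / 2 := by
      rw [abs_mul]
      calc |ε| * |w s| ≤ 1 / (2 * K₂) * K₂ := by gcongr; exact hw s hs'
        _ = 1 / 2 := by field_simp
    have h2 := abs_le.1 h1
    have h3 : P (s - 1 + ε * w s) = s - 1 + ε * w s :=
      hPe _ ⟨by linarith [hs'.1], by linarith [hs'.2]⟩
    simp only [G, h3]
  obtain ⟨w, hwc, hweq, hwu⟩ := picard_aux τ ε (z 0) (K₁ * ℓ) G hτ hGc hGl hsm (by positivity)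
  have hgc : Continuous (fun s => G (s - 1 + ε * w s)) := by fun_prop
  have hwb : ∀ t ∈ Set.Icc (0 : ℝ) (1 / 2), |w t| ≤ K₂ := by
    intro t ht
    have h2 : ‖∫ s in (0 : ℝ)..t, G (s - 1 + ε * w s)‖ ≤ K₀ * |t - 0| :=
      intervalIntegral.norm_integral_le_of_norm_le_const fun s _ => hGb _
    rw [Real.norm_eq_abs, sub_zero, abs_of_nonneg ht.1] at h2
    have h0 := hzM 0 ⟨h30, le_rfl⟩
    rw [hweq t ht, hK₂]
    calc _ ≤ |z 0| + |τ * ∫ s in (0 : ℝ)..t, G (s - 1 + ε * w s)| := abs_add_le _ _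
      _ = |z 0| + τ * |∫ s in (0 : ℝ)..t, G (s - 1 + ε * w s)| := by
        rw [abs_mul, abs_of_pos hτ]
      _ ≤ M + τ * (K₀ * (1 / 2)) := by
        gcongr
        exact h2.trans (by gcongr; exact ht.2)
      _ = _ := by ring
  refine ⟨w, ⟨⟨⟨hwc.continuousOn, ?_⟩, ?_, hwb⟩, ?_⟩, ?_⟩
  · intro t ht
    have hd : HasDerivAt (fun t => z 0 + τ * ∫ s in (0 : ℝ)..t, G (s - 1 + ε * w s))
        (τ * G (t - 1 + ε * w t)) t :=
      ((hgc.integral_hasStrictDerivAt 0 t).hasDerivAt.const_mul τ).const_add (z 0)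
    have hd' : HasDerivAt w (τ * G (t - 1 + ε * w t)) t := by
      refine hd.congr_of_eventuallyEq ?_
      filter_upwards [Icc_mem_nhds ht.1 ht.2] with x hx using hweq x hx
    refine ⟨hd'.differentiableAt, ?_⟩
    rw [hd'.deriv, abs_mul, abs_of_pos hτ]
    exact (mul_le_mul_of_nonneg_left (hGb _) hτ.le).trans hℓ
  · rw [hweq 0 ⟨le_rfl, by norm_num⟩]; simp
  · intro t ht
    rw [harg w hwb t ht]; exact hweq t ht
  · rintro v ⟨⟨hvC, _, hvb⟩, hveq⟩
    refine hwu v hvC.1 fun t ht => ?_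
    rw [← harg v hvb t ht]; exact hveq t ht
end

section
/- In the setting below, suppose ℓ ≥ τK₀ and |ε| ≤ ε₀ with ε₀ = min{1/(2K₂), 1/(τℓK₁)} (ε₀ = 1/(2K₂) if K₁ = 0). Let x₀ ∈ C^{0,ℓ}([−3/2,0]) with sup_{[−3/2,0]}|x₀| ≤ M. Define inductively x_{m/2} for m ≥ 0 by x_0 = x₀ and, for m ≥ 1, x_{m/2} : [−3/2 − m/2, 0] → ℝ given by x_{m/2}(t) = x_{(m−1)/2}(t + 1/2) for t ∈ [−3/2 − m/2, −1/2] and x_{m/2}(t) = Ψ_ε(x_{(m−1)/2})(t + 1/2) for t ∈ [−1/2, 0], where Ψ_ε(z) is the unique fixed point of O_z applied to the restriction of x_{(m−1)/2} to its last window [−3/2, 0]. Assume that for every m ≥ 0 one has |x_{m/2}(t)| ≤ M on the domain of x_{m/2}. Then the definition x(t) = x_{m/2}(t − m/2) for t ≤ m/2 is consistent in m and yields a continuous, ℓ-Lipschitz function x : [−3/2, ∞) → ℝ with x = x₀ on [−3/2, 0] and x(t) = x₀(0) + τ ∫₀ᵗ F(x(s − 1 + ε x(s))) ds for all t ≥ 0;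 in particular x is a global forward solution of x′(t) = τ F(x(t − 1 + ε x(t))) with history x₀. -/
theorem memC_lip_s8 {a b ℓ : ℝ} {f : ℝ → ℝ} (h : memC a b ℓ f) :
    ∀ s ∈ Set.Icc a b, ∀ t ∈ Set.Icc a b, s ≤ t → |f t - f s| ≤ ℓ * (t - s) := by
  intro s hs t ht hst
  rcases hst.eq_or_lt with rfl | hlt
  · simp
  obtain ⟨c, hc, hce⟩ := exists_deriv_eq_slope f hlt
    (h.1.mono (Set.Icc_subset_Icc hs.1 ht.2))
    (fun u hu => (h.2 u ⟨lt_of_le_of_lt hs.1 hu.1, lt_of_lt_of_le hu.2 ht.2⟩).1.differentiableWithinAt)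
  have h2 := (h.2 c ⟨lt_of_le_of_lt hs.1 hc.1, lt_of_lt_of_le hc.2 ht.2⟩).2
  have hp : 0 < t - s := sub_pos.2 hlt
  rw [hce, abs_div, abs_of_pos hp, div_le_iff₀ hp] at h2
  exact h2

/-- given the inductively defined sequence `x_{m/2}` (each obtained from
the previous one by translation and by applying the Half-Stroboscopic fixed point on
the last half-window) that remains bounded by `M`, the definition
`x(t) = x_{m/2}(t - m/2)` is consistent in `m` and yields a continuous ℓ-Lipschitz
global forward solution of `x'(t) = τ F (x (t - 1 + ε x t))` with history `x₀`. -/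
theorem inductive_construction_global_solution
    (τ M ℓ ε ε₀ K₀ K₁ K₂ : ℝ) (F x₀ : ℝ → ℝ) (xs : ℕ → ℝ → ℝ)
    (hτ : 0 < τ) (hM : 1 < M) (hℓpos : 0 < ℓ)
    (hF : ContDiff ℝ 1 F)
    (hK₀ : K₀ = ⨆ ξ : Set.Icc (-M) M, |F ξ.1|)
    (hK₁ : K₁ = ⨆ ξ : Set.Icc (-M) M, |deriv F ξ.1|)
    (hK₂ : K₂ = M + τ * K₀ / 2)
    (hℓ : τ * K₀ ≤ ℓ)
    (hε₀ : ε₀ = (if 0 < K₁ then min (1 / (2 * K₂)) (1 / (τ * ℓ * K₁)) else 1 / (2 * K₂)))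
    (hε : |ε| ≤ ε₀)
    (hx₀ : memC (-(3 / 2)) 0 ℓ x₀)
    (hx₀M : ∀ t ∈ Set.Icc (-(3 / 2) : ℝ) 0, |x₀ t| ≤ M)
    (h0 : ∀ t : ℝ, xs 0 t = x₀ t)
    (hshift : ∀ m : ℕ, 1 ≤ m →
      ∀ t ∈ Set.Icc (-(3 / 2) - (m : ℝ) / 2) (-(1 / 2) : ℝ),
        xs m t = xs (m - 1) (t + 1 / 2))
    (hfix : ∀ m : ℕ, 1 ≤ m →
      mem0 ℓ K₂ (xs (m - 1) 0) (fun s => xs m (s - 1 / 2)) ∧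
      ∀ t ∈ Set.Icc (0 : ℝ) (1 / 2),
        xs m (t - 1 / 2) =
          xs (m - 1) 0 + τ * ∫ s in (0 : ℝ)..t, F (xs (m - 1) (s - 1 + ε * xs m (s - 1 / 2))))
    (hbd : ∀ m : ℕ, ∀ t ∈ Set.Icc (-(3 / 2) - (m : ℝ) / 2) (0 : ℝ), |xs m t| ≤ M) :
    (∀ m n : ℕ, ∀ t : ℝ, t ∈ Set.Icc (-(3 / 2) : ℝ) ((m : ℝ) / 2) →
      t ∈ Set.Icc (-(3 / 2) : ℝ) ((n : ℝ) / 2) →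
      xs m (t - (m : ℝ) / 2) = xs n (t - (n : ℝ) / 2)) ∧
    ∃ x : ℝ → ℝ,
      (∀ m : ℕ, ∀ t ∈ Set.Icc (-(3 / 2) : ℝ) ((m : ℝ) / 2), x t = xs m (t - (m : ℝ) / 2)) ∧
      ContinuousOn x (Set.Ici (-(3 / 2) : ℝ)) ∧
      (∀ s ∈ Set.Ici (-(3 / 2) : ℝ), ∀ t ∈ Set.Ici (-(3 / 2) : ℝ),
        |x s - x t| ≤ ℓ * |s - t|) ∧
      (∀ t ∈ Set.Icc (-(3 / 2) : ℝ) 0, x t = x₀ t) ∧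
      ∀ t : ℝ, 0 ≤ t →
        x t = x₀ 0 + τ * ∫ s in (0 : ℝ)..t, F (x (s - 1 + ε * x s)) := by
  have hmono : ∀ m n : ℕ, m ≤ n → ∀ t : ℝ, t ∈ Set.Icc (-(3 / 2) : ℝ) ((m : ℝ) / 2) →
      xs n (t - (n : ℝ) / 2) = xs m (t - (m : ℝ) / 2) := by
    intro m n hmn t ht
    induction n, hmn using Nat.le_induction with
    | base => rfl
    | succ n hmn ih =>
      have hc : (m : ℝ) ≤ n := by exact_mod_cast hmn
      obtain ⟨h1, h2⟩ := ht
      rw [hshift (n + 1) (by omega), ← ih]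
      · simp only [Nat.add_sub_cancel]
        congr 1
        push_cast
        ring
      · push_cast
        constructor <;> linarith
  have hcons : ∀ m n : ℕ, ∀ t : ℝ, t ∈ Set.Icc (-(3 / 2) : ℝ) ((m : ℝ) / 2) →
      t ∈ Set.Icc (-(3 / 2) : ℝ) ((n : ℝ) / 2) →
      xs m (t - (m : ℝ) / 2) = xs n (t - (n : ℝ) / 2) := by
    intro m n t hm hn
    rcases le_total m n with h | h
    · exact (hmono m n h t hm).symm
    · exact hmono n m h t hn
  refine ⟨hcons, ?_⟩
  have hxdef : ∃ x : ℝ → ℝ, ∀ m : ℕ, ∀ t ∈ Set.Icc (-(3 / 2) : ℝ) ((m : ℝ) / 2),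
      x t = xs m (t - (m : ℝ) / 2) := by
    refine ⟨fun t => xs ⌈2 * t⌉₊ (t - (⌈2 * t⌉₊ : ℝ) / 2), fun m t ht => ?_⟩
    refine hcons _ _ t ⟨ht.1, ?_⟩ ht
    have := Nat.le_ceil (2 * t)
    linarith
  obtain ⟨x, hx⟩ := hxdef
  have hx0 : ∀ t ∈ Set.Icc (-(3 / 2) : ℝ) 0, x t = x₀ t := by
    intro t ht
    rw [hx 0 t (by simpa using ht), h0]
    simp
  have hnat : ∀ t : ℝ, ∃ m : ℕ, t ≤ (m : ℝ) / 2 := by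
    intro t
    refine ⟨⌈2 * t⌉₊, ?_⟩
    have := Nat.le_ceil (2 * t)
    linarith
  -- on the step interval
  have hstep : ∀ m : ℕ, ∀ s ∈ Set.Icc (0 : ℝ) (1 / 2),
      x (s + (m : ℝ) / 2) = xs (m + 1) (s - 1 / 2) := by
    intro m s hs
    have hm : (0 : ℝ) ≤ m := Nat.cast_nonneg m
    rw [hx (m + 1)]
    · congr 1
      push_cast
      ring
    · push_cast
      constructor <;> linarith [hs.1, hs.2]
  have hlipm : ∀ m : ℕ, ∀ s t : ℝ, -(3 / 2) ≤ s → s ≤ t → t ≤ (m : ℝ) / 2 →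
      |x t - x s| ≤ ℓ * (t - s) := by
    intro m
    induction m with
    | zero =>
      intro s t hs hst ht
      simp only [Nat.cast_zero, zero_div] at ht
      rw [hx0 t ⟨by linarith, ht⟩, hx0 s ⟨hs, by linarith⟩]
      exact memC_lip_s8 hx₀ s ⟨hs, by linarith⟩ t ⟨by linarith, ht⟩ hst
    | succ m ih =>
      intro s t hs hst ht
      have hm : (0 : ℝ) ≤ m := Nat.cast_nonneg m
      push_cast at ht
      have hpiece : ∀ s t : ℝ, (m : ℝ) / 2 ≤ s → s ≤ t → t ≤ ((m : ℝ) + 1) / 2 →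
          |x t - x s| ≤ ℓ * (t - s) := by
        intro s t hs hst ht
        have h1 := memC_lip_s8 (hfix (m + 1) (by omega)).1.1 (s - m / 2)
          ⟨by linarith, by linarith⟩ (t - m / 2) ⟨by linarith, by linarith⟩ (by linarith)
        rw [← hstep m _ ⟨by linarith, by linarith⟩, ← hstep m _ ⟨by linarith, by linarith⟩] at h1
        simpa using h1
      rcases le_total t ((m : ℝ) / 2) with h | h
      · exact ih s t hs hst h
      rcases le_total s ((m : ℝ) / 2) with h' | h'
      · have e1 := ih s (m / 2) hs h' le_rfl
        have e2 := hpiece (m / 2) t le_rfl h ht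
        have e3 := abs_sub_le (x t) (x (m / 2)) (x s)
        linarith
      · exact hpiece s t h' hst ht
  have hlip : ∀ s ∈ Set.Ici (-(3 / 2) : ℝ), ∀ t ∈ Set.Ici (-(3 / 2) : ℝ),
      |x s - x t| ≤ ℓ * |s - t| := by
    intro s hs t ht
    rcases le_total s t with h | h
    · obtain ⟨m, hm⟩ := hnat t
      rw [abs_sub_comm, abs_sub_comm s t, abs_of_nonneg (sub_nonneg.2 h)]
      exact hlipm m s t hs h hm
    · obtain ⟨m, hm⟩ := hnat s
      rw [abs_of_nonneg (sub_nonneg.2 h)]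
      exact hlipm m t s ht h hm
  have hcont : ContinuousOn x (Set.Ici (-(3 / 2) : ℝ)) := by
    have : LipschitzOnWith ⟨ℓ, hℓpos.le⟩ x (Set.Ici (-(3 / 2) : ℝ)) :=
      LipschitzOnWith.of_dist_le_mul fun s hs t ht => by
        rw [Real.dist_eq, Real.dist_eq]; exact hlip s hs t ht
    exact this.continuousOn
  have hK0 : 0 ≤ K₀ := by
    rw [hK₀]
    exact Real.iSup_nonneg fun _ => abs_nonneg _
  have hMK : M ≤ K₂ := by
    rw [hK₂]
    have : 0 ≤ τ * K₀ := mul_nonneg hτ.le hK0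
    linarith
  have hK2pos : 0 < K₂ := by linarith
  have hε2 : |ε| ≤ 1 / (2 * K₂) := by
    refine hε.trans ?_
    rw [hε₀]
    split_ifs
    · exact min_le_left _ _
    · exact le_rfl
  have hxM : ∀ t : ℝ, -(3 / 2) ≤ t → |x t| ≤ M := by
    intro t ht
    obtain ⟨m, hm⟩ := hnat t
    rw [hx m t ⟨ht, hm⟩]
    exact hbd m _ ⟨by linarith, by linarith⟩
  have hεx : ∀ t : ℝ, -(3 / 2) ≤ t → |ε * x t| ≤ 1 / 2 := by
    intro t ht
    rw [abs_mul]
    calc |ε| * |x t| ≤ 1 / (2 * K₂) * K₂ :=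
          mul_le_mul hε2 ((hxM t ht).trans hMK) (abs_nonneg _) (by positivity)
      _ = 1 / 2 := by field_simp
  have hcontI : ContinuousOn (fun s => F (x (s - 1 + ε * x s))) (Set.Ici (0 : ℝ)) := by
    refine hF.continuous.comp_continuousOn (hcont.comp ?_ ?_)
    · have : ContinuousOn x (Set.Ici (0 : ℝ)) :=
        hcont.mono (Set.Ici_subset_Ici.2 (by norm_num))
      fun_prop
    · intro s hs
      have hs' : (0 : ℝ) ≤ s := hs
      have := abs_le.1 (hεx s (by linarith))
      simp only [Set.mem_Ici]
      linarith [this.1]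
  have hint : ∀ a b : ℝ, 0 ≤ a → 0 ≤ b →
      IntervalIntegrable (fun s => F (x (s - 1 + ε * x s))) MeasureTheory.volume a b := by
    intro a b ha hb
    refine (hcontI.mono fun u hu => ?_).intervalIntegrable
    exact (le_min ha hb).trans hu.1
  have hpieceI : ∀ m : ℕ, ∀ t : ℝ, (m : ℝ) / 2 ≤ t → t ≤ ((m : ℝ) + 1) / 2 →
      x t = x ((m : ℝ) / 2) + τ * ∫ s in ((m : ℝ) / 2)..t, F (x (s - 1 + ε * x s)) := by
    intro m t h1 h2
    have hm : (0 : ℝ) ≤ m := Nat.cast_nonneg m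
    have hf := (hfix (m + 1) (by omega)).2 (t - m / 2) ⟨by linarith, by linarith⟩
    rw [← hstep m _ ⟨by linarith, by linarith⟩] at hf
    simp only [Nat.add_sub_cancel, sub_add_cancel] at hf
    have hxm : x ((m : ℝ) / 2) = xs m 0 := by
      rw [hx m _ ⟨by linarith, le_rfl⟩, sub_self]
    rw [hf, hxm]
    congr 2
    have hsub := intervalIntegral.integral_comp_add_right
      (a := 0) (b := t - m / 2) (fun s => F (x (s - 1 + ε * x s))) ((m : ℝ) / 2)
    rw [zero_add, sub_add_cancel] at hsub
    rw [← hsub]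
    refine intervalIntegral.integral_congr fun s hs => ?_
    rw [Set.uIcc_of_le (by linarith)] at hs
    have hs1 := hs.1
    have hs2 := hs.2
    have hb := abs_le.1 (hεx (s + m / 2) (by linarith))
    rw [hx m (s + m / 2 - 1 + ε * x (s + m / 2)) ⟨by linarith [hb.1], by linarith [hb.2]⟩,
      hstep m s ⟨hs1, by linarith⟩]
    congr 2
    ring
  have hsol : ∀ m : ℕ, ∀ t : ℝ, 0 ≤ t → t ≤ (m : ℝ) / 2 →
      x t = x₀ 0 + τ * ∫ s in (0 : ℝ)..t, F (x (s - 1 + ε * x s)) := by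
    intro m
    induction m with
    | zero =>
      intro t h1 h2
      simp only [Nat.cast_zero, zero_div] at h2
      obtain rfl : t = 0 := le_antisymm h2 h1
      rw [hx0 0 ⟨by norm_num, le_rfl⟩]
      simp
    | succ m ih =>
      intro t h1 h2
      have hm : (0 : ℝ) ≤ m := Nat.cast_nonneg m
      push_cast at h2
      rcases le_total t ((m : ℝ) / 2) with h | h
      · exact ih t h1 h
      · rw [hpieceI m t h h2, ih (m / 2) (by linarith) le_rfl,
          ← intervalIntegral.integral_add_adjacent_intervals
            (hint 0 (m / 2) le_rfl (by linarith)) (hint (m / 2) t (by linarith) h1)]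
        ring
  refine ⟨x, hx, hcont, hlip, hx0, fun t ht => ?_⟩
  obtain ⟨m, hm⟩ := hnat t
  exact hsol m t ht hm
end

section
/- (Lemma 2) Let H : [−3/2, 0] → ℝ be continuous and twice differentiable on (−3/2, 0), with |H′(u)| ≤ k₁ and |H″(u)| ≤ k₂ for all u ∈ (−3/2, 0), for some k₁, k₂ > 0. Let L > 0, M > 1, and let ε ∈ ℝ with |ε| ≤ 1/(2M). Let w₁, w₂ : [0,1/2] → ℝ be continuous, differentiable on (0,1/2) with |wᵢ′| ≤ L there, with w₁(0) = w₂(0) and sup_{[0,1/2]}|wᵢ| ≤ M for i = 1, 2. Set Wᵢ(t) = t − 1 + ε wᵢ(t), so that Wᵢ(s) ∈ [−3/2, 0] for all s ∈ [0,1/2]. Then sup_{t∈(0,1/2)} |(H∘W₁ − H∘W₂)′(t)| ≤ |ε| ((1 + |ε|L) k₂/2 + k₁) · d(w₁, w₂), where d(w₁, w₂) = sup_{t∈(0,1/2)} |w₁′(t) − w₂′(t)|. -/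
/-- Lemma 2: for `H` continuous on `[-3/2,0]`, twice differentiable on
`(-3/2,0)` with `|H'| ≤ k₁`, `|H''| ≤ k₂`, and `w₁, w₂ ∈ C^{0,L}_0`-type functions with
common value at `0`, sup bounded by `M`, and `|ε| ≤ 1/(2M)`, setting
`Wᵢ(t) = t - 1 + ε wᵢ(t)` (which lands in `[-3/2,0]`), one has
`sup_{(0,1/2)} |(H∘W₁ - H∘W₂)'| ≤ |ε| ((1 + |ε|L) k₂/2 + k₁) d(w₁,w₂)`. -/
theorem composition_derivative_difference_bound
    (H : ℝ → ℝ) (k₁ k₂ L M ε : ℝ)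
    (hk₁ : 0 < k₁) (hk₂ : 0 < k₂) (hL : 0 < L) (hM : 1 < M)
    (hHc : ContinuousOn H (Set.Icc (-(3 / 2)) 0))
    (hH : ∀ u ∈ Set.Ioo (-(3 / 2) : ℝ) 0,
      DifferentiableAt ℝ H u ∧ |deriv H u| ≤ k₁ ∧
        DifferentiableAt ℝ (deriv H) u ∧ |deriv (deriv H) u| ≤ k₂)
    (hε : |ε| ≤ 1 / (2 * M))
    (w₁ w₂ : ℝ → ℝ)
    (hw₁c : ContinuousOn w₁ (Set.Icc 0 (1 / 2)))
    (hw₁ : ∀ t ∈ Set.Ioo (0 : ℝ) (1 / 2), DifferentiableAt ℝ w₁ t ∧ |deriv w₁ t| ≤ L)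
    (hw₂c : ContinuousOn w₂ (Set.Icc 0 (1 / 2)))
    (hw₂ : ∀ t ∈ Set.Ioo (0 : ℝ) (1 / 2), DifferentiableAt ℝ w₂ t ∧ |deriv w₂ t| ≤ L)
    (h0 : w₁ 0 = w₂ 0)
    (hb₁ : ∀ t ∈ Set.Icc (0 : ℝ) (1 / 2), |w₁ t| ≤ M)
    (hb₂ : ∀ t ∈ Set.Icc (0 : ℝ) (1 / 2), |w₂ t| ≤ M) :
    (∀ s ∈ Set.Icc (0 : ℝ) (1 / 2),
      s - 1 + ε * w₁ s ∈ Set.Icc (-(3 / 2) : ℝ) 0 ∧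
      s - 1 + ε * w₂ s ∈ Set.Icc (-(3 / 2) : ℝ) 0) ∧
    ∀ t ∈ Set.Ioo (0 : ℝ) (1 / 2),
      |deriv (fun s => H (s - 1 + ε * w₁ s) - H (s - 1 + ε * w₂ s)) t| ≤
        |ε| * ((1 + |ε| * L) * k₂ / 2 + k₁) * dd w₁ w₂ := by
  have hM0 : 0 < M := by linarith
  have hsmall : ∀ x : ℝ, |x| ≤ M → |ε * x| ≤ 1 / 2 := by
    intro x hx
    rw [abs_mul]
    calc |ε| * |x| ≤ 1 / (2 * M) * M := by gcongr
      _ = 1 / 2 := by field_simp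
  refine ⟨?_, ?_⟩
  · intro s hs
    have h1 := abs_le.mp (hsmall _ (hb₁ s hs))
    have h2 := abs_le.mp (hsmall _ (hb₂ s hs))
    obtain ⟨ha, hb⟩ := hs
    refine ⟨⟨?_, ?_⟩, ⟨?_, ?_⟩⟩ <;> linarith
  intro t ht
  have htc := Set.Ioo_subset_Icc_self ht
  have hm1 : t - 1 + ε * w₁ t ∈ Set.Ioo (-(3 / 2) : ℝ) 0 := by
    have h1 := abs_le.mp (hsmall _ (hb₁ t htc))
    constructor <;> linarith [ht.1, ht.2]
  have hm2 : t - 1 + ε * w₂ t ∈ Set.Ioo (-(3 / 2) : ℝ) 0 := by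
    have h1 := abs_le.mp (hsmall _ (hb₂ t htc))
    constructor <;> linarith [ht.1, ht.2]
  have hbdd : BddAbove (Set.range
      fun t : Set.Ioo (0 : ℝ) (1 / 2) => |deriv w₁ t.1 - deriv w₂ t.1|) := by
    refine ⟨L + L, ?_⟩
    rintro _ ⟨s, rfl⟩
    exact (abs_sub _ _).trans (add_le_add (hw₁ s.1 s.2).2 (hw₂ s.1 s.2).2)
  have hd : ∀ s ∈ Set.Ioo (0 : ℝ) (1 / 2), |deriv w₁ s - deriv w₂ s| ≤ dd w₁ w₂ :=
    fun s hs => le_ciSup hbdd ⟨s, hs⟩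
  have hd0 : 0 ≤ dd w₁ w₂ := (abs_nonneg _).trans (hd t ht)
  have hw : |w₁ t - w₂ t| ≤ dd w₁ w₂ / 2 := by
    have hsub : Set.Icc 0 t ⊆ Set.Icc (0 : ℝ) (1 / 2) := Set.Icc_subset_Icc_right ht.2.le
    obtain ⟨c, hc, hce⟩ := exists_hasDerivAt_eq_slope (fun s => w₁ s - w₂ s)
      (fun s => deriv w₁ s - deriv w₂ s) ht.1
      ((hw₁c.mono hsub).sub (hw₂c.mono hsub))
      (fun x hx => by
        have hx' : x ∈ Set.Ioo (0 : ℝ) (1 / 2) := ⟨hx.1, hx.2.trans ht.2⟩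
        exact (hw₁ x hx').1.hasDerivAt.sub (hw₂ x hx').1.hasDerivAt)
    have hc' := hd c ⟨hc.1, hc.2.trans ht.2⟩
    have ht0 := ht.1
    have he : w₁ t - w₂ t = (deriv w₁ c - deriv w₂ c) * t := by
      rw [hce, h0]; field_simp; ring
    rw [he, abs_mul, abs_of_pos ht0]
    calc _ ≤ dd w₁ w₂ * (1 / 2) := by
          gcongr
          exact ht.2.le
      _ = _ := by ring
  have hHd : |deriv H (t - 1 + ε * w₁ t) - deriv H (t - 1 + ε * w₂ t)|
      ≤ k₂ * (|ε| * (dd w₁ w₂ / 2)) := by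
    have := (convex_Ioo (-(3 / 2) : ℝ) 0).norm_image_sub_le_of_norm_deriv_le
      (f := deriv H) (C := k₂) (fun x hx => (hH x hx).2.2.1)
      (fun x hx => (hH x hx).2.2.2) hm2 hm1
    simp only [Real.norm_eq_abs] at this
    refine this.trans ?_
    have e : t - 1 + ε * w₁ t - (t - 1 + ε * w₂ t) = ε * (w₁ t - w₂ t) := by ring
    rw [e, abs_mul]
    gcongr
  have hW : ∀ w : ℝ → ℝ, DifferentiableAt ℝ w t → 
      HasDerivAt (fun s => s - 1 + ε * w s) (1 + ε * deriv w t) t := fun w h =>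
    ((hasDerivAt_id t).sub_const 1).add (h.hasDerivAt.const_mul ε)
  have hD1 : HasDerivAt (fun s => H (s - 1 + ε * w₁ s)) _ t :=
    HasDerivAt.comp t (hH _ hm1).1.hasDerivAt (hW w₁ (hw₁ t ht).1)
  have hD2 : HasDerivAt (fun s => H (s - 1 + ε * w₂ s)) _ t :=
    HasDerivAt.comp t (hH _ hm2).1.hasDerivAt (hW w₂ (hw₂ t ht).1)
  have hD := (hD1.sub hD2).deriv
  have hD' : deriv (fun s => H (s - 1 + ε * w₁ s) - H (s - 1 + ε * w₂ s)) t = _ := hD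
  rw [hD']
  have hB : |1 + ε * deriv w₁ t| ≤ 1 + |ε| * L := by
    refine (abs_add_le _ _).trans ?_
    rw [abs_one, abs_mul]
    gcongr
    exact (hw₁ t ht).2
  have hk := (hH _ hm2).2.1
  have hdt := hd t ht
  generalize deriv H (t - 1 + ε * w₁ t) = a at *
  generalize deriv H (t - 1 + ε * w₂ t) = b at *
  have e : a * (1 + ε * deriv w₁ t) - b * (1 + ε * deriv w₂ t)
      = (a - b) * (1 + ε * deriv w₁ t) + b * (ε * (deriv w₁ t - deriv w₂ t)) := by ring
  rw [e]
  refine (abs_add_le _ _).trans ?_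
  rw [abs_mul, abs_mul b, abs_mul ε]
  calc _ ≤ k₂ * (|ε| * (dd w₁ w₂ / 2)) * (1 + |ε| * L) + k₁ * (|ε| * dd w₁ w₂) := by
        gcongr
    _ = _ := by ring
end

section
/- In the setting below, suppose ℓ ≥ 2τK₀, |ε| ≤ 1/(2K₂), and suppose z is in addition twice differentiable on (−3/2, 0) with the function H(u) = F(z(u)) satisfying |H′(u)| ≤ l₁ and |H″(u)| ≤ l₂ for all u ∈ (−3/2, 0). Then for all w₁, w₂ ∈ C^{0,ℓ}_0([0,1/2]), d(G_{w₁}, G_{w₂}) = sup_{t∈(0,1/2)} |G_{w₁}′(t) − G_{w₂}′(t)| ≤ |ε| 𝐋 d(w₁, w₂), where 𝐋 = (1 + |ε|ℓ) l₂/2 + l₁. -/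
/-- if `ℓ ≥ 2τK₀`, `|ε| ≤ 1/(2K₂)` (here `K₂ = M + τK₀`), and `z` is
twice differentiable on `(-3/2,0)` with `H = F ∘ z` satisfying `|H'| ≤ l₁`,
`|H''| ≤ l₂` there, then for all `w₁, w₂ ∈ C^{0,ℓ}_0([0,1/2])`,
`d(G_{w₁}, G_{w₂}) ≤ |ε| 𝐋 d(w₁,w₂)` with `𝐋 = (1 + |ε|ℓ) l₂/2 + l₁`. -/
theorem dd_Gw_estimate
    (τ M ℓ ε K₀ K₂ l₁ l₂ : ℝ) (F z : ℝ → ℝ)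
    (hτ : 0 < τ) (hM : 1 < M) (hℓpos : 0 < ℓ)
    (hF : ContDiff ℝ 1 F)
    (hK₀ : K₀ = ⨆ ξ : Set.Icc (-M) M, |F ξ.1|)
    (hK₂ : K₂ = M + τ * K₀)
    (hz : memC (-(3 / 2)) 0 ℓ z)
    (hzM : ∀ t ∈ Set.Icc (-(3 / 2) : ℝ) 0, |z t| ≤ M)
    (hz2 : ∀ u ∈ Set.Ioo (-(3 / 2) : ℝ) 0,
      DifferentiableAt ℝ z u ∧ DifferentiableAt ℝ (deriv z) u)
    (hH : ∀ u ∈ Set.Ioo (-(3 / 2) : ℝ) 0,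
      DifferentiableAt ℝ (fun v => F (z v)) u ∧
        |deriv (fun v => F (z v)) u| ≤ l₁ ∧
        DifferentiableAt ℝ (deriv (fun v => F (z v))) u ∧
        |deriv (deriv (fun v => F (z v))) u| ≤ l₂)
    (hℓ : 2 * τ * K₀ ≤ ℓ)
    (hε : |ε| ≤ 1 / (2 * K₂))
    (w₁ w₂ : ℝ → ℝ) (hw₁ : mem0 ℓ K₂ (z 0) w₁) (hw₂ : mem0 ℓ K₂ (z 0) w₂) :
    dd (fun s => F (z (s - 1 + ε * w₁ s))) (fun s => F (z (s - 1 + ε * w₂ s))) ≤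
      |ε| * ((1 + |ε| * ℓ) * l₂ / 2 + l₁) * dd w₁ w₂ := by
  have hK₀0 : 0 ≤ K₀ := by
    rw [hK₀]; exact Real.iSup_nonneg (fun _ => abs_nonneg _)
  have hK₂0 : 0 < K₂ := by
    rw [hK₂]; have := mul_nonneg hτ.le hK₀0; linarith
  obtain ⟨⟨hc1, hd1⟩, h01, hb1⟩ := hw₁
  obtain ⟨⟨hc2, hd2⟩, h02, hb2⟩ := hw₂
  have hbdd : BddAbove (Set.range (fun t : Set.Ioo (0 : ℝ) (1 / 2) =>
      |deriv w₁ t.1 - deriv w₂ t.1|)) := by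
    refine ⟨ℓ + ℓ, ?_⟩
    rintro _ ⟨t, rfl⟩
    exact (abs_sub _ _).trans (add_le_add (hd1 t.1 t.2).2 (hd2 t.1 t.2).2)
  have hD : ∀ t ∈ Set.Ioo (0 : ℝ) (1 / 2), |deriv w₁ t - deriv w₂ t| ≤ dd w₁ w₂ :=
    fun t ht => le_ciSup hbdd ⟨t, ht⟩
  set D := dd w₁ w₂ with hDdef
  have hD0 : 0 ≤ D := (abs_nonneg _).trans (hD (1 / 4) (by constructor <;> norm_num))
  have hdiff : ∀ t ∈ Set.Ioo (0 : ℝ) (1 / 2), |w₁ t - w₂ t| ≤ D / 2 := by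
    intro t ht
    have hsub : Set.Icc 0 t ⊆ Set.Icc (0 : ℝ) (1 / 2) := Set.Icc_subset_Icc le_rfl ht.2.le
    have hsub' : Set.Ioo 0 t ⊆ Set.Ioo (0 : ℝ) (1 / 2) := Set.Ioo_subset_Ioo le_rfl ht.2.le
    obtain ⟨c, hc, hceq⟩ := exists_hasDerivAt_eq_slope (fun s => w₁ s - w₂ s)
      (fun s => deriv w₁ s - deriv w₂ s) ht.1 ((hc1.mono hsub).sub (hc2.mono hsub))
      (fun x hx => (hd1 x (hsub' hx)).1.hasDerivAt.sub (hd2 x (hsub' hx)).1.hasDerivAt)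
    have hcD := hD c (hsub' hc)
    have ht0 : t ≠ 0 := ht.1.ne'
    have e : w₁ t - w₂ t = (deriv w₁ c - deriv w₂ c) * t := by
      rw [hceq, h01, h02]; field_simp; ring
    rw [e, abs_mul, abs_of_pos ht.1]
    have := mul_le_mul hcD ht.2.le ht.1.le hD0
    linarith
  have hu : ∀ w : ℝ → ℝ, (∀ t ∈ Set.Icc (0 : ℝ) (1 / 2), |w t| ≤ K₂) →
      ∀ t ∈ Set.Ioo (0 : ℝ) (1 / 2), t - 1 + ε * w t ∈ Set.Ioo (-(3 / 2) : ℝ) 0 := by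
    intro w hw t ht
    have h1 : |ε * w t| ≤ 1 / 2 := by
      rw [abs_mul]
      calc |ε| * |w t| ≤ 1 / (2 * K₂) * K₂ :=
            mul_le_mul hε (hw t ⟨ht.1.le, ht.2.le⟩) (abs_nonneg _) (by positivity)
        _ = 1 / 2 := by field_simp
    obtain ⟨h2, h3⟩ := abs_le.1 h1
    exact ⟨by linarith [ht.1], by linarith [ht.2]⟩
  set H : ℝ → ℝ := fun v => F (z v) with hHdef
  have hG : ∀ w : ℝ → ℝ, (∀ t ∈ Set.Icc (0 : ℝ) (1 / 2), |w t| ≤ K₂) →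
      ∀ t ∈ Set.Ioo (0 : ℝ) (1 / 2), DifferentiableAt ℝ w t →
      deriv (fun s => F (z (s - 1 + ε * w s))) t
        = deriv H (t - 1 + ε * w t) * (1 + ε * deriv w t) := by
    intro w hw t ht hwd
    have h1 : HasDerivAt (fun s => s - 1 + ε * w s) (1 + ε * deriv w t) t :=
      ((hasDerivAt_id t).sub_const 1).add (hwd.hasDerivAt.const_mul ε)
    exact (HasDerivAt.comp t (hH _ (hu w hw t ht)).1.hasDerivAt h1).deriv
  have hne : Nonempty (Set.Ioo (0 : ℝ) (1 / 2)) := ⟨⟨1 / 4, by constructor <;> norm_num⟩⟩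
  refine ciSup_le ?_
  rintro ⟨t, ht⟩
  dsimp only
  rw [hG w₁ hb1 t ht (hd1 t ht).1, hG w₂ hb2 t ht (hd2 t ht).1]
  have hu1 := hu w₁ hb1 t ht
  have hu2 := hu w₂ hb2 t ht
  have hLip : |deriv H (t - 1 + ε * w₁ t) - deriv H (t - 1 + ε * w₂ t)|
      ≤ l₂ * |(t - 1 + ε * w₁ t) - (t - 1 + ε * w₂ t)| := by
    have := (convex_Ioo (-(3 / 2) : ℝ) 0).norm_image_sub_le_of_norm_deriv_le
      (f := deriv H) (C := l₂) (fun x hx => (hH x hx).2.2.1)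
      (fun x hx => (hH x hx).2.2.2) hu2 hu1
    simpa only [Real.norm_eq_abs] using this
  have hl2 : 0 ≤ l₂ := (abs_nonneg _).trans (hH _ hu1).2.2.2
  have hl1 : 0 ≤ l₁ := (abs_nonneg _).trans (hH _ hu1).2.1
  have e1 : (t - 1 + ε * w₁ t) - (t - 1 + ε * w₂ t) = ε * (w₁ t - w₂ t) := by ring
  rw [e1, abs_mul] at hLip
  have hA : |deriv H (t - 1 + ε * w₁ t) - deriv H (t - 1 + ε * w₂ t)| ≤ l₂ * (|ε| * (D / 2)) :=
    hLip.trans (by gcongr; exact hdiff t ht)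
  have hB : |1 + ε * deriv w₁ t| ≤ 1 + |ε| * ℓ := by
    refine (abs_add_le _ _).trans ?_
    rw [abs_one, abs_mul]
    gcongr
    exact (hd1 t ht).2
  have e2 : deriv H (t - 1 + ε * w₁ t) * (1 + ε * deriv w₁ t)
      - deriv H (t - 1 + ε * w₂ t) * (1 + ε * deriv w₂ t)
      = (deriv H (t - 1 + ε * w₁ t) - deriv H (t - 1 + ε * w₂ t)) * (1 + ε * deriv w₁ t)
        + deriv H (t - 1 + ε * w₂ t) * (ε * (deriv w₁ t - deriv w₂ t)) := by ring
  rw [e2]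
  refine (abs_add_le _ _).trans ?_
  rw [abs_mul, abs_mul, abs_mul ε]
  calc _ ≤ l₂ * (|ε| * (D / 2)) * (1 + |ε| * ℓ) + l₁ * (|ε| * D) := by
        gcongr
        · exact (hH _ hu2).2.1
        · exact hD t ht
    _ = _ := by ring
end
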